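/- arXiv:2506.11872 — 6 statements merged into one kernel-verified Lean document; each statement's English description precedes it below -/
import Mathlib

section
/- Let X be a real Banach space and let (C_n)_{n∈ℕ} be a sequence of non-empty subsets of X. Then the following are equivalent: (i) the series ∑_n C_n is unconditionally convergent (i.e., for every choice of x_n ∈ C_n the series ∑_n x_n is unconditionally convergent in X); (ii) for every ε > 0 there exists N_ε ∈ ℕ such that sup{‖x‖ : x ∈ ∑_{n∈P} C_n} ≤ ε for every finite non-empty set P ⊆ ℕ \ {1,…,N_ε}. -/
/-!
The condition on finite sums is the Cauchy criterion for summability, uniform over all selections,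
so completeness makes every selection summable. Conversely, if the criterion fails for a
neighbourhood `U` of `0`, then there are infinitely many pairwise disjoint finite blocks, each
carrying a partial selection whose sum lies outside `U`. Disjointness allows these partial
selections to be glued to a single selection, which violates the Cauchy criterion: a finite index
set meets only finitely many of the blocks.
-/

/-- The series of sets `∑ₙ Cₙ` is unconditionally convergent: every selection is
(unconditionally) summable. In a Banach space, `Summable` (convergence of the net of
finite partial sums) is equivalent to unconditional convergence. -/
def UncondConvSeriesOfSets {X : Type*} [NormedAddCommGroup X] (C : ℕ → Set X) : Prop :=
  ∀ x : ℕ → X, (∀ n, x n ∈ C n) → Summable x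

section SeriesOfSets

open Function
open scoped Pointwise Topology

variable {ι κ G : Type*}

/-- The Cauchy criterion for unconditional convergence of a series of sets: outside some finite set
of indices, all finite Minkowski sums of the sets lie in a prescribed neighbourhood of `0`. -/
def UncondCauchySeriesOfSets [AddCommMonoid G] [TopologicalSpace G] (C : ι → Set G) : Prop :=
  ∀ U ∈ 𝓝 (0 : G), ∃ s : Finset ι, ∀ t : Finset ι, Disjoint t s → ∑ i ∈ t, C i ⊆ U

theorem exists_seq_pairwise_disjoint_finset {p : Finset ι → Prop}
    (h : ∀ s, ∃ t, Disjoint t s ∧ p t) :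
    ∃ P : ℕ → Finset ι, (∀ k, p (P k)) ∧ Pairwise (Disjoint on P) := by
  classical
  refine exists_seq_of_forall_finset_exists' p Disjoint fun S _ => ?_
  obtain ⟨t, hdisj, ht⟩ := h (S.biUnion id)
  exact ⟨t, ht, fun s hs => (hdisj.mono_right (Finset.subset_biUnion_of_mem id hs)).symm⟩

theorem exists_disjoint_finset_of_pairwise_disjoint [Infinite κ] {P : κ → Finset ι}
    (hP : Pairwise (Disjoint on P)) (s : Finset ι) : ∃ k, Disjoint (P k) s := by
  by_contra! hmeet
  choose i hiP his using fun k => Finset.not_disjoint_iff.1 (hmeet k)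
  obtain ⟨j, k, hjk, heq⟩ :=
    Finite.exists_ne_map_eq_of_infinite fun k => (⟨i k, his k⟩ : s)
  have hij : i j = i k := congrArg Subtype.val heq
  exact Finset.disjoint_left.1 (hP hjk) (hiP j) (hij ▸ hiP k)

theorem exists_selection_sum_eq_of_pairwise_disjoint [AddCommMonoid G] {C : ι → Set G}
    (hC : ∀ i, (C i).Nonempty) {P : κ → Finset ι} (hP : Pairwise (Disjoint on P)) {z : κ → G}
    (hz : ∀ k, z k ∈ ∑ i ∈ P k, C i) :
    ∃ y : ι → G, (∀ i, y i ∈ C i) ∧ ∀ k, ∑ i ∈ P k, y i = z k := by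
  choose x hxC hxz using fun k => (Set.mem_finsetSum _ _ _).1 (hz k)
  have hglue : ∀ i, ∃ a ∈ C i, ∀ k, i ∈ P k → a = x k i := by
    intro i
    by_cases hi : ∃ k, i ∈ P k
    · obtain ⟨k, hk⟩ := hi
      refine ⟨x k i, hxC k hk, fun j hj => ?_⟩
      have hkj : k = j := hP.eq (Finset.not_disjoint_iff.2 ⟨i, hk, hj⟩)
      rw [hkj]
    · obtain ⟨a, ha⟩ := hC i
      exact ⟨a, ha, fun k hk => absurd ⟨k, hk⟩ hi⟩
  choose y hyC hyx using hglue
  exact ⟨y, hyC, fun k => (Finset.sum_congr rfl fun i hi => hyx i k hi).trans (hxz k)⟩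

theorem uncondCauchySeriesOfSets_of_forall_summable [AddCommGroup G] [TopologicalSpace G]
    [IsTopologicalAddGroup G] {C : ι → Set G} (hC : ∀ i, (C i).Nonempty)
    (hsum : ∀ x : ι → G, (∀ i, x i ∈ C i) → Summable x) : UncondCauchySeriesOfSets C := by
  intro U hU
  by_contra! hfail
  obtain ⟨P, hPU, hP⟩ := exists_seq_pairwise_disjoint_finset hfail
  choose z hz hzU using fun k => Set.not_subset.1 (hPU k)
  obtain ⟨y, hyC, hyz⟩ := exists_selection_sum_eq_of_pairwise_disjoint hC hP hz
  obtain ⟨s, hs⟩ := (hsum y hyC).vanishing hU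
  obtain ⟨k, hk⟩ := exists_disjoint_finset_of_pairwise_disjoint hP s
  exact hzU k (hyz k ▸ hs (P k) hk)

theorem UncondCauchySeriesOfSets.summable [AddCommGroup G] [UniformSpace G] [IsUniformAddGroup G]
    [CompleteSpace G] {C : ι → Set G} (hC : UncondCauchySeriesOfSets C) {x : ι → G}
    (hx : ∀ i, x i ∈ C i) : Summable x := by
  refine summable_iff_vanishing.2 fun U hU => ?_
  obtain ⟨s, hs⟩ := hC U hU
  exact ⟨s, fun t ht => hs t ht (Set.finsetSum_mem_finsetSum t C x fun i _ => hx i)⟩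

theorem uncondCauchySeriesOfSets_iff_norm_sum_le [SeminormedAddCommGroup G] {C : ℕ → Set G} :
    UncondCauchySeriesOfSets C ↔
      ∀ ε : ℝ, 0 < ε → ∃ N : ℕ, ∀ P : Finset ℕ, P.Nonempty → (∀ n ∈ P, N < n) →
        ∀ x : ℕ → G, (∀ n ∈ P, x n ∈ C n) → ‖∑ n ∈ P, x n‖ ≤ ε := by
  constructor
  · intro hC ε hε
    obtain ⟨s, hs⟩ := hC _ (Metric.closedBall_mem_nhds 0 hε)
    refine ⟨s.sup id, fun P _ hP x hx => mem_closedBall_zero_iff.1 ?_⟩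
    have hdisj : Disjoint P s := Finset.disjoint_left.2 fun n hnP hns =>
      (hP n hnP).not_ge (Finset.le_sup (f := id) hns)
    exact hs P hdisj (Set.finsetSum_mem_finsetSum P C x hx)
  · intro h U hU
    obtain ⟨ε, hε, hεU⟩ := Metric.nhds_basis_closedBall.mem_iff.1 hU
    obtain ⟨N, hN⟩ := h ε hε
    refine ⟨Finset.Iic N, fun t ht z hz => hεU (mem_closedBall_zero_iff.2 ?_)⟩
    obtain ⟨x, hx, rfl⟩ := (Set.mem_finsetSum _ _ _).1 hz
    rcases t.eq_empty_or_nonempty with rfl | htne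
    · simpa using hε.le
    · have htN : ∀ n ∈ t, N < n := fun n hn =>
        not_le.1 fun hnN => Finset.disjoint_left.1 ht hn (Finset.mem_Iic.2 hnN)
      exact hN t htne htN x fun n hn => hx hn

theorem statement0_general [AddCommGroup G] [UniformSpace G] [IsUniformAddGroup G]
    [CompleteSpace G] {C : ι → Set G} (hC : ∀ i, (C i).Nonempty) :
    (∀ x : ι → G, (∀ i, x i ∈ C i) → Summable x) ↔ UncondCauchySeriesOfSets C :=
  ⟨uncondCauchySeriesOfSets_of_forall_summable hC, fun hCauchy _ hx => hCauchy.summable hx⟩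

end SeriesOfSets

/-- Let `X` be a real Banach space and `(Cₙ)` a sequence of non-empty
subsets of `X`. The series `∑ₙ Cₙ` is unconditionally convergent iff for every `ε > 0`
there is `N` such that `‖∑_{n ∈ P} Cₙ‖ ≤ ε` for every finite non-empty
`P ⊆ ℕ \ {0, …, N}`, i.e. every element of the set `∑_{n ∈ P} Cₙ` has norm `≤ ε`. -/
theorem statement0 {X : Type*} [NormedAddCommGroup X] [NormedSpace ℝ X] [CompleteSpace X]
    (C : ℕ → Set X) (hne : ∀ n, (C n).Nonempty) :
    UncondConvSeriesOfSets C ↔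
      ∀ ε : ℝ, 0 < ε → ∃ N : ℕ, ∀ P : Finset ℕ, P.Nonempty → (∀ n ∈ P, N < n) →
        ∀ x : ℕ → X, (∀ n ∈ P, x n ∈ C n) → ‖∑ n ∈ P, x n‖ ≤ ε := by
  exact (statement0_general hne).trans uncondCauchySeriesOfSets_iff_norm_sum_le
end

section
/- Let X be a real Banach space and let (C_n)_{n∈ℕ} be a sequence of bounded non-empty subsets of X such that the series ∑_n C_n is unconditionally convergent. Then the sum set ∑_n C_n is bounded and, for each continuous linear functional x* ∈ X*, the series ∑_n s(x*, C_n) is absolutely convergent with sum s(x*, ∑_n C_n). -/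
/-- The sum of the series of sets `∑ₙ Cₙ`: the set of all sums of selections. -/
def seriesSumSet {X : Type*} [NormedAddCommGroup X] (C : ℕ → Set X) : Set X :=
  {s | ∃ x : ℕ → X, (∀ n, x n ∈ C n) ∧ HasSum x s}

/-- The support functional `s(x*, C) = sup x*(C)`. -/
noncomputable def supportFn {X : Type*} [NormedAddCommGroup X] [NormedSpace ℝ X]
    (f : X →L[ℝ] ℝ) (C : Set X) : ℝ := sSup (f '' C)

/-!
A continuous linear functional `f` carries the series of sets `∑ₙ Cₙ` to the series `∑ₙ f(Cₙ)` of
subsets of `ℝ`, so the assertion on support functionals is one about real sets `Aₙ`. Choose in each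
`Aₙ` a point within `ε / 2 / 2 ^ n` of `sup Aₙ`. These points form a summable series, hence
`∑ₙ sup Aₙ` converges as well, and its sum exceeds theirs by at most `ε`; as it also dominates the
sum of every selection, it is the supremum of `∑ₙ Aₙ`. In particular every functional is bounded
above on `∑ₙ Cₙ`; using `f` and `-f`, this set is weakly bounded, hence bounded by the uniform
boundedness principle.
-/

theorem isBounded_of_forall_isBounded_image_dual {𝕜 X : Type*} [RCLike 𝕜]
    [NormedAddCommGroup X] [NormedSpace 𝕜 X] {S : Set X}
    (hS : ∀ f : StrongDual 𝕜 X, Bornology.IsBounded (f '' S)) : Bornology.IsBounded S := by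
  let evalAt : S → StrongDual 𝕜 (StrongDual 𝕜 X) := fun x =>
    NormedSpace.inclusionInDoubleDualLi 𝕜 (x : X)
  have pointwise_bounded (f : StrongDual 𝕜 X) : ∃ M, ∀ x : S, ‖evalAt x f‖ ≤ M := by
    obtain ⟨M, hM⟩ := (hS f).exists_norm_le
    exact ⟨M, fun x => hM _ (Set.mem_image_of_mem f x.2)⟩
  obtain ⟨K, hK⟩ := banach_steinhaus pointwise_bounded
  refine isBounded_iff_forall_norm_le.2 ⟨K, fun x hx => ?_⟩
  calc ‖x‖ = ‖evalAt ⟨x, hx⟩‖ := ((NormedSpace.inclusionInDoubleDualLi 𝕜).norm_map x).symm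
    _ ≤ K := hK ⟨x, hx⟩

theorem isBounded_of_forall_bddAbove_image_dual {X : Type*} [NormedAddCommGroup X]
    [NormedSpace ℝ X] {S : Set X}
    (hS : ∀ f : StrongDual ℝ X, BddAbove (f '' S)) : Bornology.IsBounded S := by
  refine isBounded_of_forall_isBounded_image_dual (𝕜 := ℝ) fun f => ?_
  have bddBelow : BddBelow (f '' S) := by
    obtain ⟨b, hb⟩ := hS (-f)
    refine ⟨-b, Set.forall_mem_image.2 fun x hx => neg_le.1 ?_⟩
    exact hb (Set.mem_image_of_mem (-f) hx)
  exact isBounded_iff_bddBelow_bddAbove.2 ⟨bddBelow, hS f⟩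

namespace UncondConvSeriesOfSets

section Image

variable {X Y F : Type*} [NormedAddCommGroup X] [NormedAddCommGroup Y] [FunLike F X Y]
  [AddMonoidHomClass F X Y] {C : ℕ → Set X}

theorem nonempty_seriesSumSet (hC : UncondConvSeriesOfSets C) (hne : ∀ n, (C n).Nonempty) :
    (seriesSumSet C).Nonempty := by
  choose x hx using hne
  exact ⟨∑' n, x n, x, hx, (hC x hx).hasSum⟩

theorem image (hC : UncondConvSeriesOfSets C) (f : F) (hf : Continuous f) :
    UncondConvSeriesOfSets fun n => f '' C n := by
  intro y hy
  choose x hxC hxy using hy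
  obtain rfl : f ∘ x = y := funext hxy
  exact (hC x hxC).map f hf

theorem image_seriesSumSet (hC : UncondConvSeriesOfSets C) (f : F) (hf : Continuous f) :
    f '' seriesSumSet C = seriesSumSet fun n => f '' C n := by
  apply Set.Subset.antisymm
  · rintro _ ⟨s, ⟨x, hxC, hxs⟩, rfl⟩
    exact ⟨f ∘ x, fun n => Set.mem_image_of_mem f (hxC n), hxs.map f hf⟩
  · rintro t ⟨y, hy, hyt⟩
    choose x hxC hxy using hy
    obtain rfl : f ∘ x = y := funext hxy
    have hxs := (hC x hxC).hasSum
    exact ⟨∑' n, x n, ⟨x, hxC, hxs⟩, (hxs.map f hf).unique hyt⟩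

end Image

section Real

variable {A : ℕ → Set ℝ}

theorem summable_sSup (hA : UncondConvSeriesOfSets A) (hne : ∀ n, (A n).Nonempty)
    (hbd : ∀ n, BddAbove (A n)) : Summable fun n => sSup (A n) := by
  choose a haA ha using fun n =>
    exists_lt_of_lt_csSup (hne n) (sub_lt_self _ (by positivity : (0 : ℝ) < 1 / 2 / 2 ^ n))
  have gap_summable : Summable fun n => sSup (A n) - a n :=
    (summable_geometric_two' 1).of_nonneg_of_le
      (fun n => sub_nonneg.2 (le_csSup (hbd n) (haA n)))
      (fun n => (sub_lt_comm.1 (ha n)).le)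
  exact (hA a haA).trans_sub gap_summable

theorem isLUB_seriesSumSet (hA : UncondConvSeriesOfSets A) (hne : ∀ n, (A n).Nonempty)
    (hbd : ∀ n, BddAbove (A n)) : IsLUB (seriesSumSet A) (∑' n, sSup (A n)) := by
  have sSup_hasSum := (hA.summable_sSup hne hbd).hasSum
  refine ⟨?_, fun b hb => le_of_forall_pos_le_add fun ε hε => ?_⟩
  · rintro s ⟨a, haA, has⟩
    exact hasSum_le (fun n => le_csSup (hbd n) (haA n)) has sSup_hasSum
  · choose a haA ha using fun n =>
      exists_lt_of_lt_csSup (hne n) (sub_lt_self _ (by positivity : 0 < ε / 2 / 2 ^ n))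
    have has := (hA a haA).hasSum
    calc ∑' n, sSup (A n) ≤ ∑' n, a n + ε :=
          hasSum_le (fun n => (sub_lt_iff_lt_add.1 (ha n)).le) sSup_hasSum
            (has.add (hasSum_geometric_two' ε))
      _ ≤ b + ε := by gcongr; exact hb ⟨a, haA, has⟩

end Real

section SupportFn

variable {X : Type*} [NormedAddCommGroup X] [NormedSpace ℝ X] {C : ℕ → Set X} {f : X →L[ℝ] ℝ}

theorem summable_supportFn (hC : UncondConvSeriesOfSets C) (hne : ∀ n, (C n).Nonempty)
    (hbd : ∀ n, BddAbove (f '' C n)) : Summable fun n => supportFn f (C n) :=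
  (hC.image f f.continuous).summable_sSup (fun n => (hne n).image f) hbd

theorem isLUB_image_seriesSumSet (hC : UncondConvSeriesOfSets C) (hne : ∀ n, (C n).Nonempty)
    (hbd : ∀ n, BddAbove (f '' C n)) :
    IsLUB (f '' seriesSumSet C) (∑' n, supportFn f (C n)) := by
  rw [hC.image_seriesSumSet f f.continuous]
  exact (hC.image f f.continuous).isLUB_seriesSumSet (fun n => (hne n).image f) hbd

theorem tsum_supportFn (hC : UncondConvSeriesOfSets C) (hne : ∀ n, (C n).Nonempty)
    (hbd : ∀ n, BddAbove (f '' C n)) :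
    ∑' n, supportFn f (C n) = supportFn f (seriesSumSet C) :=
  ((hC.isLUB_image_seriesSumSet hne hbd).csSup_eq ((hC.nonempty_seriesSumSet hne).image f)).symm

end SupportFn

end UncondConvSeriesOfSets

theorem statement1_general {X : Type*} [NormedAddCommGroup X] [NormedSpace ℝ X]
    (C : ℕ → Set X) (hne : ∀ n, (C n).Nonempty) (hbd : ∀ n, Bornology.IsBounded (C n))
    (huc : UncondConvSeriesOfSets C) :
    Bornology.IsBounded (seriesSumSet C) ∧
      ∀ f : X →L[ℝ] ℝ, Summable (fun n => |supportFn f (C n)|) ∧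
        (∑' n, supportFn f (C n)) = supportFn f (seriesSumSet C) := by
  have bddAbove_image (f : X →L[ℝ] ℝ) (n : ℕ) : BddAbove (f '' C n) :=
    (f.lipschitz.isBounded_image (hbd n)).bddAbove
  constructor
  · exact isBounded_of_forall_bddAbove_image_dual fun f =>
      (huc.isLUB_image_seriesSumSet hne (bddAbove_image f)).bddAbove
  · intro f
    exact ⟨(huc.summable_supportFn hne (bddAbove_image f)).abs,
      huc.tsum_supportFn hne (bddAbove_image f)⟩

/-- If `(Cₙ)` is a sequence of bounded non-empty subsets of a Banach
space `X` whose series is unconditionally convergent, then the sum set `∑ₙ Cₙ` is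
bounded and, for each `x* ∈ X*`, the series `∑ₙ s(x*, Cₙ)` is absolutely convergent
with sum `s(x*, ∑ₙ Cₙ)`. -/
theorem statement1 {X : Type*} [NormedAddCommGroup X] [NormedSpace ℝ X] [CompleteSpace X]
    (C : ℕ → Set X) (hne : ∀ n, (C n).Nonempty) (hbd : ∀ n, Bornology.IsBounded (C n))
    (huc : UncondConvSeriesOfSets C) :
    Bornology.IsBounded (seriesSumSet C) ∧
      ∀ f : X →L[ℝ] ℝ, Summable (fun n => |supportFn f (C n)|) ∧
        (∑' n, supportFn f (C n)) = supportFn f (seriesSumSet C) :=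
  statement1_general C hne hbd huc
end

section
/- Let X be a real Banach space and let Y ⊆ X* be a total set. Let (C_n)_{n∈ℕ} be a sequence of non-empty subsets of X, each of which is compact in the topology σ(X,Y). If the series ∑_n C_n is unconditionally convergent, then its sum set ∑_n C_n is σ(X,Y)-compact. -/
/-- The topology `σ(X, Y)` of pointwise convergence on a set `Y ⊆ X*`. -/
def sigmaTop {X : Type*} [NormedAddCommGroup X] [NormedSpace ℝ X]
    (Y : Set (X →L[ℝ] ℝ)) : TopologicalSpace X :=
  TopologicalSpace.induced (fun x => fun y : Y => (y : X →L[ℝ] ℝ) x) Pi.topologicalSpace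

/-!
Evaluation on `Y` is a continuous linear map `F` from `X` into `Y → ℝ` inducing `σ(X, Y)`, and it
carries the sum set onto the image of the product of the sets `F '' Cₙ` under summation. That
product is compact by Tychonoff, and summation is continuous on it by the Weierstrass M-test: for a
fixed coordinate, choose in each set a point of maximal norm; the series of these points converges
unconditionally, hence absolutely because the coordinate space is finite-dimensional, and its
norms dominate those of every other selection.
-/

open Set

section Coordinate

variable {α E : Type*} [NormedAddCommGroup E] [NormedSpace ℝ E] [FiniteDimensional ℝ E]
  {K : α → Set E}

theorem exists_summable_norm_le_of_isCompact (hK : ∀ n, IsCompact (K n))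
    (hne : ∀ n, (K n).Nonempty) (hsum : ∀ x : α → E, (∀ n, x n ∈ K n) → Summable x) :
    ∃ M : α → ℝ, Summable M ∧ ∀ n, ∀ x ∈ K n, ‖x‖ ≤ M n := by
  choose x hxK hmax using fun n => (hK n).exists_isMaxOn (hne n) continuous_norm.continuousOn
  exact ⟨fun n => ‖x n‖, (hsum x hxK).norm, fun n _ hy => hmax n hy⟩

theorem continuousOn_tsum_univ_pi (hK : ∀ n, IsCompact (K n))
    (hsum : ∀ x : α → E, (∀ n, x n ∈ K n) → Summable x) :
    ContinuousOn (fun x : α → E => ∑' n, x n) (univ.pi K) := by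
  have : CompleteSpace E := FiniteDimensional.complete ℝ E
  rcases (univ.pi K).eq_empty_or_nonempty with hempty | hnonempty
  · exact hempty ▸ continuousOn_empty _
  · obtain ⟨M, hM, hle⟩ :=
      exists_summable_norm_le_of_isCompact hK (univ_pi_nonempty_iff.1 hnonempty) hsum
    exact continuousOn_tsum (fun n => (continuous_apply n).continuousOn) hM
      fun n x hx => hle n (x n) (hx n (mem_univ n))

end Coordinate

section Image

variable {α X W G : Type*} [AddCommMonoid X] [TopologicalSpace X] [AddCommMonoid W]
  [TopologicalSpace W] [FunLike G X W] [AddMonoidHomClass G X W] {C : α → Set X}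

theorem summable_of_forall_mem_image (F : G) (hF : Continuous F)
    (hsum : ∀ x : α → X, (∀ n, x n ∈ C n) → Summable x) {z : α → W}
    (hz : ∀ n, z n ∈ F '' C n) : Summable z := by
  choose x hxC hxz using hz
  obtain rfl : F ∘ x = z := funext hxz
  exact (hsum x hxC).map F hF

theorem image_setOf_hasSum_eq_image_tsum [T2Space W] (F : G) (hF : Continuous F)
    (hsum : ∀ x : α → X, (∀ n, x n ∈ C n) → Summable x) :
    F '' {s | ∃ x : α → X, (∀ n, x n ∈ C n) ∧ HasSum x s} =
      (fun z : α → W => ∑' n, z n) '' univ.pi fun n => F '' C n := by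
  ext w
  constructor
  · rintro ⟨s, ⟨x, hxC, hs⟩, rfl⟩
    exact ⟨F ∘ x, fun n _ => mem_image_of_mem F (hxC n), (hs.map F hF).tsum_eq⟩
  · rintro ⟨z, hz, rfl⟩
    choose x hxC hxz using fun n => hz n (mem_univ n)
    obtain rfl : F ∘ x = z := funext hxz
    have hs : HasSum x (∑' n, x n) := (hsum x hxC).hasSum
    exact ⟨_, ⟨x, hxC, hs⟩, (hs.map F hF).tsum_eq.symm⟩

end Image

section Product

variable {α ι : Type*} {E : ι → Type*} [∀ i, NormedAddCommGroup (E i)]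
  [∀ i, NormedSpace ℝ (E i)] [∀ i, FiniteDimensional ℝ (E i)]

theorem continuousOn_tsum_univ_pi_of_pi {K : α → Set (∀ i, E i)} (hK : ∀ n, IsCompact (K n))
    (hsum : ∀ z : α → ∀ i, E i, (∀ n, z n ∈ K n) → Summable z) :
    ContinuousOn (fun z : α → ∀ i, E i => ∑' n, z n) (univ.pi K) := by
  refine continuousOn_pi.2 fun i => ?_
  let evalAt : (∀ j, E j) →+ E i := Pi.evalAddMonoidHom E i
  have hevalAt : Continuous evalAt := continuous_apply i
  have hcont_image : ContinuousOn (fun x : α → E i => ∑' n, x n)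
      (univ.pi fun n => evalAt '' K n) :=
    continuousOn_tsum_univ_pi (fun n => (hK n).image hevalAt)
      fun _ => summable_of_forall_mem_image evalAt hevalAt hsum
  have hcont_coord : ContinuousOn (fun z : α → ∀ j, E j => ∑' n, z n i) (univ.pi K) :=
    hcont_image.comp (f := fun (z : α → ∀ j, E j) n => z n i) (by fun_prop)
      fun z hz n hn => mem_image_of_mem evalAt (hz n hn)
  exact hcont_coord.congr fun z hz => tsum_apply (hsum z fun n => hz n (mem_univ n))

theorem statement2_general {X G : Type*} [AddCommMonoid X] [TopologicalSpace X]
    [FunLike G X (∀ i, E i)] [AddMonoidHomClass G X (∀ i, E i)] (F : G) (hF : Continuous F)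
    (C : α → Set X) (hC : ∀ n, @IsCompact X (.induced F Pi.topologicalSpace) (C n))
    (hsum : ∀ x : α → X, (∀ n, x n ∈ C n) → Summable x) :
    @IsCompact X (.induced F Pi.topologicalSpace)
      {s | ∃ x : α → X, (∀ n, x n ∈ C n) ∧ HasSum x s} := by
  have isCompact_iff_image (S : Set X) :
      @IsCompact X (.induced F Pi.topologicalSpace) S ↔ IsCompact (F '' S) :=
    letI : TopologicalSpace X := .induced F Pi.topologicalSpace
    (Topology.IsInducing.induced F).isCompact_iff
  have hFC (n : α) : IsCompact (F '' C n) := (isCompact_iff_image _).1 (hC n)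
  rw [isCompact_iff_image, image_setOf_hasSum_eq_image_tsum F hF hsum]
  exact (isCompact_univ_pi hFC).image_of_continuousOn
    (continuousOn_tsum_univ_pi_of_pi hFC fun _ => summable_of_forall_mem_image F hF hsum)

end Product

/-- Let `X` be a Banach space, `Y ⊆ X*` total, and `(Cₙ)` a sequence of
non-empty `σ(X,Y)`-compact subsets of `X`. If the series `∑ₙ Cₙ` is unconditionally
convergent then its sum set is `σ(X,Y)`-compact. -/
theorem statement2 {X : Type*} [NormedAddCommGroup X] [NormedSpace ℝ X] [CompleteSpace X]
    (Y : Set (X →L[ℝ] ℝ)) (hYtotal : ∀ x : X, (∀ f ∈ Y, f x = 0) → x = 0)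
    (C : ℕ → Set X) (hne : ∀ n, (C n).Nonempty)
    (hcpt : ∀ n, @IsCompact X (sigmaTop Y) (C n))
    (huc : UncondConvSeriesOfSets C) :
    @IsCompact X (sigmaTop Y) (seriesSumSet C) := by
  let evalOnY : X →L[ℝ] (Y → ℝ) := .pi fun f => f
  exact statement2_general evalOnY evalOnY.continuous C hcpt huc
end

section
/- Let X be a real Banach space, let Y ⊆ X* be a total set, and let M : Σ → b(X) be a set-valued map defined on a σ-algebra Σ such that M(A) is σ(X,Y)-compact for every A ∈ Σ. Then the following are equivalent: (i) M is a strong multimeasure; (ii) for every disjoint sequence (A_n)_n in Σ the series ∑_n M(A_n) is unconditionally convergent and M(⋃_n A_n) = ∑_n M(A_n) (equality of sets, without taking closures). -/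
/-- `M` is a strong multimeasure: for every disjoint sequence of measurable sets the
series `∑ₙ M(Aₙ)` is unconditionally convergent and the norm closure of `M(⋃ₙ Aₙ)`
equals the norm closure of `∑ₙ M(Aₙ)`. -/
def IsStrongMultimeasure {Ω X : Type*} [MeasurableSpace Ω] [NormedAddCommGroup X]
    (M : Set Ω → Set X) : Prop :=
  ∀ A : ℕ → Set Ω, (∀ n, MeasurableSet (A n)) → Pairwise (Function.onFun Disjoint A) →
    UncondConvSeriesOfSets (fun n => M (A n)) ∧
    closure (M (⋃ n, A n)) = closure (seriesSumSet fun n => M (A n))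

/-!
Both `M (⋃ₙ Aₙ)` and `∑ₙ M (Aₙ)` turn out to be norm closed, so taking closures changes nothing.
Since `Y` is total, `σ(X, Y)` is a Hausdorff topology coarser than the norm topology, and hence
`σ(X, Y)`-compact sets are norm closed. The sum of an unconditionally convergent series of
`σ(X, Y)`-compact sets `Cₙ` is again `σ(X, Y)`-compact, being the image of the compact product
`∏ₙ Cₙ` under `(xₙ) ↦ ∑ₙ xₙ`. For the continuity of this map, given `f ∈ Y` choose `zₙ ∈ Cₙ`
maximizing `|f|`: the selection `(zₙ)` is itself summable, so `∑ₙ |f zₙ| < ∞` dominates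
`∑ₙ f xₙ` uniformly over all selections and the Weierstrass test applies.
-/

open Topology

theorem continuous_tsum_pi_of_summable_norm {ι E : Type*} {K : ι → Type*}
    [∀ i, TopologicalSpace (K i)] [∀ i, CompactSpace (K i)]
    [NormedAddCommGroup E] [CompleteSpace E] {g : ∀ i, K i → E}
    (hg : ∀ i, Continuous (g i)) (hsum : ∀ x : ∀ i, K i, Summable fun i => ‖g i (x i)‖) :
    Continuous fun x : ∀ i, K i => ∑' i, g i (x i) := by
  obtain hK | ⟨⟨x₀⟩⟩ := isEmpty_or_nonempty (∀ i, K i)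
  · exact continuous_iff_continuousAt.mpr isEmptyElim
  have exists_max (i : ι) : ∃ z, ∀ x, ‖g i x‖ ≤ ‖g i z‖ := by
    obtain ⟨z, -, hz⟩ := isCompact_univ.exists_isMaxOn ⟨x₀ i, Set.mem_univ _⟩
      (hg i).norm.continuousOn
    exact ⟨z, fun x => hz (Set.mem_univ x)⟩
  choose z hz using exists_max
  exact continuous_tsum (fun i => (hg i).comp (continuous_apply i)) (hsum z)
    fun i x => hz i (x i)

theorem seriesSumSet_eq_range_tsum {X : Type*} [NormedAddCommGroup X] {C : ℕ → Set X}
    (hC : UncondConvSeriesOfSets C) :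
    seriesSumSet C = Set.range fun x : ∀ n, C n => ∑' n, (x n : X) := by
  ext s
  constructor
  · rintro ⟨x, hxC, hxs⟩
    exact ⟨fun n => ⟨x n, hxC n⟩, hxs.tsum_eq⟩
  · rintro ⟨x, rfl⟩
    exact ⟨fun n => x n, fun n => (x n).2, (hC _ fun n => (x n).2).hasSum⟩

section SigmaTop

variable {X : Type*} [NormedAddCommGroup X] [NormedSpace ℝ X] {Y : Set (X →L[ℝ] ℝ)}

theorem continuous_sigmaTop_iff {Z : Type*} [TopologicalSpace Z] {g : Z → X} :
    Continuous[_, sigmaTop Y] g ↔ ∀ f ∈ Y, Continuous fun z => f (g z) :=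
  continuous_induced_rng.trans <| continuous_pi_iff.trans Subtype.forall

theorem le_sigmaTop : (inferInstance : TopologicalSpace X) ≤ sigmaTop Y :=
  continuous_id_iff_le.mp <| continuous_sigmaTop_iff.mpr fun f _ => f.continuous

theorem t2Space_sigmaTop (hY : ∀ x : X, (∀ f ∈ Y, f x = 0) → x = 0) :
    @T2Space X (sigmaTop Y) := by
  let := sigmaTop Y
  refine T2Space.of_injective_continuous (fun a b hab => ?_) continuous_induced_dom
  refine sub_eq_zero.mp (hY _ fun f hf => ?_)
  rw [map_sub, sub_eq_zero]
  exact congrFun hab ⟨f, hf⟩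

theorem isClosed_of_isCompact_sigmaTop (hY : ∀ x : X, (∀ f ∈ Y, f x = 0) → x = 0)
    {S : Set X} (hS : @IsCompact X (sigmaTop Y) S) : IsClosed S :=
  IsClosed.mono (@IsCompact.isClosed X (sigmaTop Y) (t2Space_sigmaTop hY) S hS) le_sigmaTop

theorem continuous_sigmaTop_tsum_pi {ι : Type*} {K : ι → Type*} [∀ i, TopologicalSpace (K i)]
    [∀ i, CompactSpace (K i)] {s : ∀ i, K i → X}
    (hs : ∀ i, Continuous[_, sigmaTop Y] (s i))
    (hsum : ∀ x : ∀ i, K i, Summable fun i => s i (x i)) :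
    Continuous[_, sigmaTop Y] fun x : ∀ i, K i => ∑' i, s i (x i) := by
  refine continuous_sigmaTop_iff.mpr fun f hf => ?_
  simp only [fun x => f.map_tsum (hsum x)]
  exact continuous_tsum_pi_of_summable_norm
    (fun i => continuous_sigmaTop_iff.mp (hs i) f hf)
    fun x => ((hsum x).map f f.continuous).norm

theorem isCompact_sigmaTop_seriesSumSet {C : ℕ → Set X}
    (hcpt : ∀ n, @IsCompact X (sigmaTop Y) (C n)) (hC : UncondConvSeriesOfSets C) :
    @IsCompact X (sigmaTop Y) (seriesSumSet C) := by
  let (n : ℕ) : TopologicalSpace (C n) := (sigmaTop Y).induced Subtype.val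
  have (n : ℕ) : CompactSpace (C n) :=
    (@isCompact_iff_compactSpace X (sigmaTop Y) (C n)).mp (hcpt n)
  have continuous_sum :
      Continuous[_, sigmaTop Y] fun x : ∀ n, C n => ∑' n, (x n : X) :=
    continuous_sigmaTop_tsum_pi (fun _ => continuous_induced_dom) fun x => hC _ fun n => (x n).2
  rw [seriesSumSet_eq_range_tsum hC]
  exact @isCompact_range _ _ _ (sigmaTop Y) _ _ continuous_sum

end SigmaTop

theorem statement3_general {Ω X : Type*} [MeasurableSpace Ω]
    [NormedAddCommGroup X] [NormedSpace ℝ X]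
    (Y : Set (X →L[ℝ] ℝ)) (hYtotal : ∀ x : X, (∀ f ∈ Y, f x = 0) → x = 0)
    (M : Set Ω → Set X)
    (hcpt : ∀ A : Set Ω, MeasurableSet A → @IsCompact X (sigmaTop Y) (M A)) :
    IsStrongMultimeasure M ↔
      ∀ A : ℕ → Set Ω, (∀ n, MeasurableSet (A n)) → Pairwise (Function.onFun Disjoint A) →
        UncondConvSeriesOfSets (fun n => M (A n)) ∧
        M (⋃ n, A n) = seriesSumSet (fun n => M (A n)) := by
  refine forall₃_congr fun A hA _ => and_congr_right fun hconv => ?_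
  have isClosed_iUnion : IsClosed (M (⋃ n, A n)) :=
    isClosed_of_isCompact_sigmaTop hYtotal (hcpt _ (MeasurableSet.iUnion hA))
  have isClosed_sum : IsClosed (seriesSumSet fun n => M (A n)) :=
    isClosed_of_isCompact_sigmaTop hYtotal
      (isCompact_sigmaTop_seriesSumSet (fun n => hcpt _ (hA n)) hconv)
  rw [isClosed_iUnion.closure_eq, isClosed_sum.closure_eq]

/-- Let `X` be a Banach space, `Y ⊆ X*` a total set, and
`M : Σ → b(X)` a set-valued map with `σ(X,Y)`-compact values. Then `M` is a strong
multimeasure iff for every disjoint sequence `(Aₙ)` in `Σ` the series `∑ₙ M(Aₙ)` is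
unconditionally convergent and `M(⋃ₙ Aₙ) = ∑ₙ M(Aₙ)` (no closures taken). -/
theorem statement3 {Ω X : Type*} [MeasurableSpace Ω]
    [NormedAddCommGroup X] [NormedSpace ℝ X] [CompleteSpace X]
    (Y : Set (X →L[ℝ] ℝ)) (hYtotal : ∀ x : X, (∀ f ∈ Y, f x = 0) → x = 0)
    (M : Set Ω → Set X)
    (hne : ∀ A : Set Ω, MeasurableSet A → (M A).Nonempty)
    (hbd : ∀ A : Set Ω, MeasurableSet A → Bornology.IsBounded (M A))
    (hcpt : ∀ A : Set Ω, MeasurableSet A → @IsCompact X (sigmaTop Y) (M A)) :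
    IsStrongMultimeasure M ↔
      ∀ A : ℕ → Set Ω, (∀ n, MeasurableSet (A n)) → Pairwise (Function.onFun Disjoint A) →
        UncondConvSeriesOfSets (fun n => M (A n)) ∧
        M (⋃ n, A n) = seriesSumSet (fun n => M (A n)) := by
  exact statement3_general Y hYtotal M hcpt
end

section
/- Let X be a real Banach space, let Y ⊆ X* be a total linear subspace, and let M : Σ → b(X) be a set-valued map defined on a σ-algebra Σ such that M(A) is convex and σ(X,Y)-compact for every A ∈ Σ, and such that the support map s(x*,M) is finitely additive for every x* ∈ Y. Then M(A ∪ B) = M(A) + M(B) whenever A, B ∈ Σ are disjoint. -/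
/-!
A closed convex set in a locally convex space is determined by its support functional, by
Hahn–Banach separation, and the support functional of a sum is the sum of the support functionals.
In `σ(X, Y)`, which is Hausdorff because `Y` is total, both `M (A ∪ B)` and `M A + M B` are compact
and convex, hence closed. The continuous functionals of `σ(X, Y)` are the elements of `Y`, and on
these the two support functionals agree.
-/

open Pointwise

/-- A set function `μ : Σ → ℝ` is finitely additive. -/
def FinitelyAdditive {Ω : Type*} [MeasurableSpace Ω] (μ : Set Ω → ℝ) : Prop :=
  ∀ A B : Set Ω, MeasurableSet A → MeasurableSet B → Disjoint A B →
    μ (A ∪ B) = μ A + μ B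

section LocallyConvex

variable {E : Type*} [AddCommGroup E] [Module ℝ E] [TopologicalSpace E]

theorem sSup_image_add_of_isCompact {C D : Set E} (hC_ne : C.Nonempty) (hD_ne : D.Nonempty)
    (hC : IsCompact C) (hD : IsCompact D) (f : StrongDual ℝ E) :
    sSup (f '' (C + D)) = sSup (f '' C) + sSup (f '' D) := by
  rw [Set.image_add, csSup_add (hC_ne.image f) (hC.bddAbove_image f.continuous.continuousOn)
    (hD_ne.image f) (hD.bddAbove_image f.continuous.continuousOn)]

variable [IsTopologicalAddGroup E] [ContinuousSMul ℝ E] [LocallyConvexSpace ℝ E]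

theorem subset_of_forall_sSup_image_le {K L : Set E} (hK_ne : K.Nonempty) (hK_conv : Convex ℝ K)
    (hK_closed : IsClosed K) (hL : ∀ f : StrongDual ℝ E, BddAbove (f '' L))
    (hLK : ∀ f : StrongDual ℝ E, sSup (f '' L) ≤ sSup (f '' K)) : L ⊆ K := by
  intro x hxL
  by_contra hxK
  obtain ⟨f, u, hfK, hux⟩ := geometric_hahn_banach_closed_point hK_conv hK_closed hxK
  have hx_le : f x ≤ u := calc
    f x ≤ sSup (f '' L) := le_csSup (hL f) (Set.mem_image_of_mem f hxL)
    _ ≤ sSup (f '' K) := hLK f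
    _ ≤ u := csSup_le (hK_ne.image f) (Set.forall_mem_image.2 fun a ha => (hfK a ha).le)
  exact hx_le.not_gt hux

variable [T2Space E]

theorem eq_of_forall_sSup_image_eq {K L : Set E} (hK_ne : K.Nonempty) (hL_ne : L.Nonempty)
    (hK_conv : Convex ℝ K) (hL_conv : Convex ℝ L) (hK : IsCompact K) (hL : IsCompact L)
    (hKL : ∀ f : StrongDual ℝ E, sSup (f '' K) = sSup (f '' L)) : K = L :=
  Set.Subset.antisymm
    (subset_of_forall_sSup_image_le hL_ne hL_conv hL.isClosed
      (fun f => hK.bddAbove_image f.continuous.continuousOn) fun f => (hKL f).le)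
    (subset_of_forall_sSup_image_le hK_ne hK_conv hK.isClosed
      (fun f => hL.bddAbove_image f.continuous.continuousOn) fun f => (hKL f).ge)

end LocallyConvex

theorem t2Space_weakBilin_of_separatingLeft {𝕜 E F : Type*} [CommRing 𝕜] [TopologicalSpace 𝕜]
    [T2Space 𝕜] [AddCommGroup E] [Module 𝕜 E] [AddCommGroup F] [Module 𝕜 F]
    {B : E →ₗ[𝕜] F →ₗ[𝕜] 𝕜} (hB : B.SeparatingLeft) :
    T2Space (WeakBilin B) :=
  (WeakBilin.isEmbedding
    (LinearMap.ker_eq_bot.1 (LinearMap.separatingLeft_iff_ker_eq_bot.1 hB))).t2Space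

theorem statement4_general {Ω E F : Type*} [MeasurableSpace Ω] [AddCommGroup E] [Module ℝ E]
    [AddCommGroup F] [Module ℝ F] {B : E →ₗ[ℝ] F →ₗ[ℝ] ℝ} (hB : B.SeparatingLeft)
    (M : Set Ω → Set (WeakBilin B))
    (hne : ∀ S : Set Ω, MeasurableSet S → (M S).Nonempty)
    (hconv : ∀ S : Set Ω, MeasurableSet S → Convex ℝ (M S))
    (hcpt : ∀ S : Set Ω, MeasurableSet S → IsCompact (M S))
    (hfa : ∀ y : F, FinitelyAdditive fun S => sSup (WeakBilin.eval B y '' M S))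
    (S T : Set Ω) (hS : MeasurableSet S) (hT : MeasurableSet T) (hST : Disjoint S T) :
    M (S ∪ T) = M S + M T := by
  have := t2Space_weakBilin_of_separatingLeft hB
  have hU := hS.union hT
  refine eq_of_forall_sSup_image_eq (hne _ hU) ((hne S hS).add (hne T hT)) (hconv _ hU)
    ((hconv S hS).add (hconv T hT)) (hcpt _ hU) ((hcpt S hS).add (hcpt T hT)) fun f => ?_
  obtain ⟨y, rfl⟩ := LinearMap.dualEmbedding_surjective B f
  rw [sSup_image_add_of_isCompact (hne S hS) (hne T hT) (hcpt S hS) (hcpt T hT)]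
  exact hfa y S T hS hT hST

/-- The evaluation pairing `(x, f) ↦ f x` of `X` with a subspace `Y` of its dual. The type
`WeakBilin (evalPairing Y)` is `X` with the topology `σ(X, Y)`, definitionally equal to
`sigmaTop Y` when `X` is normed. -/
def evalPairing {X : Type*} [AddCommGroup X] [Module ℝ X] [TopologicalSpace X]
    (Y : Submodule ℝ (X →L[ℝ] ℝ)) : X →ₗ[ℝ] Y →ₗ[ℝ] ℝ :=
  (topDualPairing ℝ X ∘ₗ Y.subtype).flip

theorem separatingLeft_evalPairing_iff {X : Type*} [AddCommGroup X] [Module ℝ X]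
    [TopologicalSpace X] {Y : Submodule ℝ (X →L[ℝ] ℝ)} :
    (evalPairing Y).SeparatingLeft ↔ ∀ x : X, (∀ f ∈ Y, f x = 0) → x = 0 :=
  forall_congr' fun _ => imp_congr_left Subtype.forall

/-- Let `X` be a Banach space, `Y ⊆ X*` a total linear subspace, and
`M : Σ → b(X)` a set-valued map whose values are convex and `σ(X,Y)`-compact, such that
`s(x*, M)` is finitely additive for every `x* ∈ Y`. Then `M(A ∪ B) = M(A) + M(B)` for
disjoint `A, B ∈ Σ`. -/
theorem statement4 {Ω X : Type*} [MeasurableSpace Ω]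
    [NormedAddCommGroup X] [NormedSpace ℝ X] [CompleteSpace X]
    (Y : Submodule ℝ (X →L[ℝ] ℝ))
    (hYtotal : ∀ x : X, (∀ f ∈ Y, f x = 0) → x = 0)
    (M : Set Ω → Set X)
    (hne : ∀ A : Set Ω, MeasurableSet A → (M A).Nonempty)
    (hbd : ∀ A : Set Ω, MeasurableSet A → Bornology.IsBounded (M A))
    (hconv : ∀ A : Set Ω, MeasurableSet A → Convex ℝ (M A))
    (hcpt : ∀ A : Set Ω, MeasurableSet A → @IsCompact X (sigmaTop (Y : Set (X →L[ℝ] ℝ))) (M A))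
    (hfa : ∀ f ∈ Y, FinitelyAdditive (fun A => supportFn f (M A))) :
    ∀ A B : Set Ω, MeasurableSet A → MeasurableSet B → Disjoint A B →
      M (A ∪ B) = M A + M B := by
  have hadd := statement4_general (Ω := Ω) (E := X) (F := Y) (B := evalPairing Y)
    (separatingLeft_evalPairing_iff.2 hYtotal)
  exact hadd M hne hconv hcpt fun f => hfa f f.2
end

section
/- Let X be a real Banach space containing no subspace isomorphic to ℓ∞ and let M : Σ → b(X) be a set-valued map defined on a σ-algebra Σ. Suppose there is a total linear subspace Y ⊆ X* such that: (i) M(A) is convex and σ(X,Y)-compact for every A ∈ Σ; and (ii) the support map s(x*,M) is countably additive for every x* ∈ Y. Then M is a strong multimeasure. -/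
/-- A set function on a σ-algebra, with values in a topological abelian monoid, is
countably additive. -/
def CountablyAdditive {Ω E : Type*} [MeasurableSpace Ω] [AddCommMonoid E]
    [TopologicalSpace E] (ν : Set Ω → E) : Prop :=
  ∀ A : ℕ → Set Ω, (∀ n, MeasurableSet (A n)) → Pairwise (Function.onFun Disjoint A) →
    HasSum (fun n => ν (A n)) (ν (⋃ n, A n))

/-- `X` contains a subspace isomorphic to `ℓ∞`: there is a bounded linear map from
`ℓ∞ = lp (fun _ : ℕ => ℝ) ∞` into `X` which is bounded below (hence an isomorphism onto
its closed image). -/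
def ContainsIsoCopyOfLinfty (X : Type*) [NormedAddCommGroup X] [NormedSpace ℝ X] : Prop :=
  ∃ T : lp (fun _ : ℕ => ℝ) ⊤ →L[ℝ] X, ∃ c : ℝ, 0 < c ∧
    ∀ u : lp (fun _ : ℕ => ℝ) ⊤, c * ‖u‖ ≤ ‖T u‖

/-! ### Bounded families and the variation of a functional on them -/

theorem norm_add_norm_le_of_forall_abs_add_le {E F : Type*} [NormedAddCommGroup E] [NormedSpace ℝ E]
    [NormedAddCommGroup F] [NormedSpace ℝ F] {φ : E →L[ℝ] ℝ} {ψ : F →L[ℝ] ℝ} {C : ℝ}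
    (h : ∀ u v, ‖u‖ ≤ 1 → ‖v‖ ≤ 1 → |φ u + ψ v| ≤ C) : ‖φ‖ + ‖ψ‖ ≤ C := by
  by_contra! hC
  obtain ⟨u, hu, hφ⟩ := φ.exists_lt_apply_of_lt_opNorm (r := C - ‖ψ‖) (by linarith)
  obtain ⟨v, hv, hψ⟩ := ψ.exists_lt_apply_of_lt_opNorm (r := C - ‖φ u‖) (by linarith)
  have hadd := abs_le.1 (h u v hu.le hv.le)
  have hsub := abs_le.1 (h u (-v) hu.le (by simpa using hv.le))
  simp only [map_neg, Real.norm_eq_abs] at hsub hψ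
  rcases abs_cases (φ u) with hu | hu <;> rcases abs_cases (ψ v) with hv | hv <;> linarith

/-- The Banach algebra `ℓ∞(ι)` of bounded real families indexed by `ι`. -/
abbrev Linfty (ι : Type*) := lp (fun _ : ι => ℝ) ⊤

namespace Linfty

variable {ι : Type*}

theorem abs_apply_le (u : Linfty ι) (i : ι) : |u i| ≤ ‖u‖ :=
  lp.norm_apply_le_norm ENNReal.top_ne_zero u i

theorem norm_le {u : Linfty ι} {C : ℝ} (hC : 0 ≤ C) (h : ∀ i, |u i| ≤ C) : ‖u‖ ≤ C :=
  lp.norm_le_of_forall_le hC h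

/-- The indicator family `1_J` as an element of `ℓ∞(ι)`. Restricting a family to `J` is multiplying
it by `indicator J`. -/
noncomputable def indicator (J : Set ι) : Linfty ι :=
  ⟨J.indicator 1, memℓp_infty ⟨1, by
    rintro _ ⟨i, rfl⟩
    by_cases h : i ∈ J <;> simp [h]⟩⟩

open Classical in
theorem indicator_apply (J : Set ι) (i : ι) : indicator J i = if i ∈ J then 1 else 0 :=
  Set.indicator_apply _ _ _

open Classical in
theorem indicator_mul_apply (J : Set ι) (u : Linfty ι) (i : ι) :
    (indicator J * u) i = if i ∈ J then u i else 0 := by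
  by_cases h : i ∈ J <;> simp [indicator_apply, h]

theorem indicator_univ : indicator (Set.univ : Set ι) = 1 := by
  ext i
  simp [indicator_apply]

theorem indicator_inter (A B : Set ι) : indicator (A ∩ B) = indicator A * indicator B :=
  Subtype.ext (Set.inter_indicator_one)

theorem indicator_union {A B : Set ι} (h : Disjoint A B) :
    indicator (A ∪ B) = indicator A + indicator B :=
  Subtype.ext (Set.indicator_union_of_disjoint h 1)

theorem indicator_biUnion {κ : Type*} {F : κ → Set ι} (hF : Pairwise (Function.onFun Disjoint F))
    (s : Finset κ) : indicator (⋃ k ∈ s, F k) = ∑ k ∈ s, indicator (F k) := by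
  ext i
  rw [lp.coeFn_sum, Finset.sum_apply]
  exact Finset.indicator_biUnion_apply s F (fun _ _ _ _ h => hF h) i

theorem norm_indicator_le (J : Set ι) : ‖indicator J‖ ≤ 1 :=
  norm_le zero_le_one fun i => by by_cases h : i ∈ J <;> simp [indicator_apply, h]

theorem norm_indicator_mul_add_indicator_mul_le {A B : Set ι} (h : Disjoint A B) {u v : Linfty ι}
    {C : ℝ} (hu : ‖u‖ ≤ C) (hv : ‖v‖ ≤ C) : ‖indicator A * u + indicator B * v‖ ≤ C := by
  have hC : 0 ≤ C := (norm_nonneg u).trans hu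
  refine norm_le hC fun i => ?_
  have hui := (abs_apply_le u i).trans hu
  have hvi := (abs_apply_le v i).trans hv
  simp only [lp.coeFn_add, Pi.add_apply, indicator_mul_apply]
  by_cases hA : i ∈ A
  · simpa [hA, Set.disjoint_left.1 h hA] using hui
  · by_cases hB : i ∈ B <;> simp [hA, hB, hvi, hC]

/-- The total variation on `J` of the finitely additive measure represented by `m ∈ ℓ∞(ι)*`,
encoded as the norm of the restriction of `m` to the families supported in `J`. -/
noncomputable def variation (m : Linfty ι →L[ℝ] ℝ) (J : Set ι) : ℝ :=
  ‖m ∘L ContinuousLinearMap.mul ℝ (Linfty ι) (indicator J)‖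

variable (m : Linfty ι →L[ℝ] ℝ)

theorem variation_nonneg (J : Set ι) : 0 ≤ variation m J :=
  norm_nonneg _

theorem variation_univ : variation m Set.univ = ‖m‖ := by
  have h : m ∘L ContinuousLinearMap.mul ℝ (Linfty ι) 1 = m := by ext u; simp
  rw [variation, indicator_univ, h]

theorem abs_apply_indicator_mul_le (J : Set ι) (u : Linfty ι) :
    |m (indicator J * u)| ≤ variation m J * ‖u‖ :=
  (m ∘L ContinuousLinearMap.mul ℝ (Linfty ι) (indicator J)).le_opNorm u

theorem abs_apply_indicator_le (J : Set ι) : |m (indicator J)| ≤ variation m J := by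
  have h := abs_apply_indicator_mul_le m J (indicator J)
  rw [← indicator_inter, Set.inter_self] at h
  exact h.trans (mul_le_of_le_one_right (variation_nonneg m J) (norm_indicator_le J))

theorem variation_union {A B : Set ι} (h : Disjoint A B) :
    variation m (A ∪ B) = variation m A + variation m B := by
  apply le_antisymm
  · rw [variation, indicator_union h, map_add, ContinuousLinearMap.comp_add]
    exact norm_add_le _ _
  · refine norm_add_norm_le_of_forall_abs_add_le fun u v hu hv => ?_
    have hsupp : indicator (A ∪ B) * (indicator A * u + indicator B * v) =
        indicator A * u + indicator B * v := by
      ext i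
      simp only [indicator_mul_apply, lp.coeFn_add, Pi.add_apply, Set.mem_union]
      by_cases hA : i ∈ A <;> by_cases hB : i ∈ B <;> simp [hA, hB]
    calc |m (indicator A * u) + m (indicator B * v)|
        = |m (indicator (A ∪ B) * (indicator A * u + indicator B * v))| := by
          rw [hsupp, map_add]
      _ ≤ variation m (A ∪ B) * ‖indicator A * u + indicator B * v‖ :=
          abs_apply_indicator_mul_le m _ _
      _ ≤ variation m (A ∪ B) := mul_le_of_le_one_right (variation_nonneg m _)
          (norm_indicator_mul_add_indicator_mul_le h hu hv)

theorem variation_mono {A B : Set ι} (h : A ⊆ B) : variation m A ≤ variation m B := by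
  rw [← Set.union_sdiff_cancel h, variation_union m Set.disjoint_sdiff_right]
  exact le_add_of_nonneg_right (variation_nonneg m _)

theorem variation_le_norm (J : Set ι) : variation m J ≤ ‖m‖ :=
  variation_univ m ▸ variation_mono m (Set.subset_univ J)

theorem norm_two_smul_sub_sign_le {u : Linfty ι} (hu : ‖u‖ ≤ 1) :
    ‖(2 : ℝ) • u - (indicator {i | 0 ≤ u i} - indicator {i | u i < 0})‖ ≤ 1 := by
  refine norm_le zero_le_one fun i => ?_
  have hui := abs_le.1 ((abs_apply_le u i).trans hu)
  simp only [lp.coeFn_sub, lp.coeFn_smul, Pi.sub_apply, Pi.smul_apply, smul_eq_mul,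
    indicator_apply, Set.mem_ofPred_eq]
  rcases le_or_gt 0 (u i) with h | h
  · simp only [h, not_lt.2 h, if_true, if_false, abs_le]
    constructor <;> linarith
  · simp only [h, not_le.2 h, if_true, if_false, abs_le]
    constructor <;> linarith

/- On the unit ball `u = (s + u') / 2` with `s = 1_{u ≥ 0} - 1_{u < 0}` and `‖u'‖ ≤ 1`, so the
variation is at most `B` plus half of itself. -/
theorem variation_le_of_forall_subset {E : Set ι} {B : ℝ}
    (h : ∀ F ⊆ E, |m (indicator F)| ≤ B) : variation m E ≤ 2 * B := by
  suffices variation m E ≤ B + variation m E / 2 by linarith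
  have hB : 0 ≤ B := (abs_nonneg _).trans (h E subset_rfl)
  have hE := variation_nonneg m E
  refine ContinuousLinearMap.opNorm_le_of_unit_norm (by positivity) fun u hu => ?_
  set u' := (2 : ℝ) • u - (indicator {i | 0 ≤ u i} - indicator {i | u i < 0}) with hu'
  have hm : 2 * m (indicator E * u) = m (indicator (E ∩ {i | 0 ≤ u i})) -
      m (indicator (E ∩ {i | u i < 0})) + m (indicator E * u') := by
    rw [indicator_inter, indicator_inter, hu', ← map_sub, ← map_add, ← smul_eq_mul, ← map_smul]
    congr 1
    rw [mul_sub, mul_sub, mul_smul_comm]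
    abel
  have hpos := abs_le.1 (h _ (Set.inter_subset_left (t := {i | 0 ≤ u i})))
  have hneg := abs_le.1 (h _ (Set.inter_subset_left (t := {i | u i < 0})))
  have hrest := abs_le.1 ((abs_apply_indicator_mul_le m E u').trans
    (mul_le_of_le_one_right hE (norm_two_smul_sub_sign_le hu.le)))
  simp only [ContinuousLinearMap.comp_apply, ContinuousLinearMap.mul_apply', Real.norm_eq_abs,
    abs_le]
  constructor <;> linarith

end Linfty

/-! ### Rosenthal's lemma -/

theorem exists_pairwise_disjoint_infinite_subsets {ι : Type*} {S : Set ι} (hS : S.Infinite) :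
    ∃ P : ℕ → Set ι, (∀ p, (P p).Infinite) ∧ (∀ p, P p ⊆ S) ∧
      Pairwise (Function.onFun Disjoint P) := by
  let e : ℕ × ℕ ↪ ι :=
    (Nat.pairEquiv.toEmbedding.trans hS.natEmbedding).trans (Function.Embedding.subtype _)
  refine ⟨fun p => Set.range fun q => e (p, q), fun p => ?_, fun p => ?_, fun p p' hp => ?_⟩
  · exact Set.infinite_range_of_injective fun q q' h => (Prod.ext_iff.1 (e.injective h)).2
  · rintro _ ⟨q, rfl⟩
    exact (hS.natEmbedding _ _).2
  · rw [Function.onFun, Set.disjoint_left]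
    rintro _ ⟨q, rfl⟩ ⟨q', h⟩
    exact hp (Prod.ext_iff.1 (e.injective h)).1.symm

section Rosenthal

variable {ι : Type*} {a : ι → Set ι → ℝ}

theorem monotone_of_superadditive {a : Set ι → ℝ} (h0 : ∀ J, 0 ≤ a J)
    (hadd : ∀ J K, Disjoint J K → a J + a K ≤ a (J ∪ K)) : Monotone a := by
  intro J K hJK
  have h := hadd J (K \ J) Set.disjoint_sdiff_right
  rw [Set.union_sdiff_cancel hJK] at h
  linarith [h0 (K \ J)]

/- If no piece of a partition of `S` into infinitely many infinite sets is suitable, one bad index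
from each piece makes up a set on which the bound has dropped by `δ`. -/
theorem exists_infinite_forall_sdiff_singleton_le_of_le_nat_mul (h0 : ∀ i J, 0 ≤ a i J)
    (hadd : ∀ i J K, Disjoint J K → a i J + a i K ≤ a i (J ∪ K)) {δ : ℝ} (hδ : 0 ≤ δ) (N : ℕ)
    {S : Set ι} (hS : S.Infinite) (hN : ∀ i ∈ S, a i S ≤ N * δ) :
    ∃ L : Set ι, L.Infinite ∧ ∀ i ∈ L, a i (L \ {i}) ≤ δ := by
  have mono i : Monotone (a i) := monotone_of_superadditive (h0 i) (hadd i)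
  induction N generalizing S with
  | zero =>
    refine ⟨S, hS, fun i hi => (mono i Set.sdiff_subset).trans ((hN i hi).trans ?_)⟩
    simpa using hδ
  | succ N ih =>
    obtain ⟨P, hPinf, hPS, hPdisj⟩ := exists_pairwise_disjoint_infinite_subsets hS
    by_contra! hbad
    choose k hkP hkδ using fun p => hbad (P p) (hPinf p)
    have mem_unique {p p'} (h : k p ∈ P p') : p = p' := by
      by_contra hne
      exact Set.disjoint_left.1 (hPdisj hne) (hkP p) h
    have hkinj : Function.Injective k := fun p p' h => mem_unique (h ▸ hkP p')
    have hk : ∀ i ∈ Set.range k, a i (Set.range k) ≤ N * δ := by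
      rintro _ ⟨p, rfl⟩
      have hdisj : Disjoint (Set.range k) (P p \ {k p}) := by
        rw [Set.disjoint_left]
        rintro _ ⟨p', rfl⟩ ⟨hp', hne⟩
        exact hne (congrArg k (mem_unique hp'))
      have hsub : Set.range k ∪ P p \ {k p} ⊆ S :=
        Set.union_subset (Set.range_subset_iff.2 fun p' => hPS p' (hkP p'))
          (Set.sdiff_subset.trans (hPS p))
      have hdrop := (hadd (k p) _ _ hdisj).trans
        ((mono (k p) hsub).trans (hN (k p) (hPS p (hkP p))))
      push_cast at hdrop
      linarith [hkδ p]
    obtain ⟨L, hLinf, hL⟩ := ih (Set.infinite_range_of_injective hkinj) hk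
    obtain ⟨i, hi, hiδ⟩ := hbad L hLinf
    exact hiδ.not_ge (hL i hi)

theorem exists_infinite_forall_sdiff_singleton_le [Infinite ι] (h0 : ∀ i J, 0 ≤ a i J)
    (hadd : ∀ i J K, Disjoint J K → a i J + a i K ≤ a i (J ∪ K)) {C : ℝ} (hC : ∀ i J, a i J ≤ C)
    {δ : ℝ} (hδ : 0 < δ) : ∃ L : Set ι, L.Infinite ∧ ∀ i ∈ L, a i (L \ {i}) ≤ δ := by
  obtain ⟨N, hN⟩ := exists_nat_ge (C / δ)
  rw [div_le_iff₀ hδ] at hN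
  exact exists_infinite_forall_sdiff_singleton_le_of_le_nat_mul h0 hadd hδ.le N Set.infinite_univ
    fun i _ => (hC i _).trans hN

end Rosenthal

/-! ### Operators on `ℓ∞` that do not shrink the unit vectors -/

namespace Linfty

variable {ι κ : Type*}

theorem abs_extend_apply_le (e : ι ↪ κ) (u : Linfty ι) (k : κ) :
    |Function.extend e u 0 k| ≤ ‖u‖ := by
  by_cases hk : ∃ i, e i = k
  · obtain ⟨i, rfl⟩ := hk
    rw [e.injective.extend_apply]
    exact abs_apply_le u i
  · simp [Function.extend_apply' _ _ _ hk]

/-- Extension by zero along an embedding `e : ι ↪ κ`, as a linear isometry `ℓ∞(ι) → ℓ∞(κ)`. -/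
noncomputable def extend (e : ι ↪ κ) : Linfty ι →ₗᵢ[ℝ] Linfty κ where
  toFun u := ⟨Function.extend e u 0,
    memℓp_infty ⟨‖u‖, Set.forall_mem_range.2 (abs_extend_apply_le e u)⟩⟩
  map_add' u v := Subtype.ext <|
    (congrArg _ (add_zero 0).symm).trans (Function.extend_add e (u : ι → ℝ) v 0 0)
  map_smul' c u := Subtype.ext <|
    (congrArg _ (smul_zero c).symm).trans (Function.extend_smul c e (u : ι → ℝ) 0)
  norm_map' u := by
    refine le_antisymm (norm_le (norm_nonneg u) (abs_extend_apply_le e u))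
      (norm_le (norm_nonneg _) fun i => le_trans ?_ (abs_apply_le _ (e i)))
    exact (congrArg abs (e.injective.extend_apply u 0 i)).ge

theorem extend_apply (e : ι ↪ κ) (u : Linfty ι) (i : ι) : extend e u (e i) = u i :=
  e.injective.extend_apply u 0 i

theorem extend_apply_of_notMem_range (e : ι ↪ κ) (u : Linfty ι) {k : κ} (hk : k ∉ Set.range e) :
    extend e u k = 0 :=
  Function.extend_apply' u (0 : κ → ℝ) k hk

theorem abs_apply_mul_abs_le (m : Linfty ι →L[ℝ] ℝ) {L : Set ι} {w : Linfty ι}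
    (hw : ∀ i ∉ L, w i = 0) (i : ι) :
    |w i| * |m (indicator {i})| ≤ |m w| + variation m (L \ {i}) * ‖w‖ := by
  have hsplit : w i • indicator {i} = w - indicator (L \ {i}) * w := by
    ext j
    simp only [lp.coeFn_sub, lp.coeFn_smul, Pi.sub_apply, Pi.smul_apply, smul_eq_mul,
      indicator_mul_apply, indicator_apply, Set.mem_sdiff, Set.mem_singleton_iff]
    by_cases hji : j = i
    · simp [hji]
    · by_cases hjL : j ∈ L <;> simp [hji, hjL, hw]
  calc |w i| * |m (indicator {i})| = |m w - m (indicator (L \ {i}) * w)| := by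
        rw [← abs_mul, ← smul_eq_mul, ← map_smul, hsplit, map_sub]
    _ ≤ |m w| + |m (indicator (L \ {i}) * w)| := abs_sub _ _
    _ ≤ |m w| + variation m (L \ {i}) * ‖w‖ := by
        gcongr
        exact abs_apply_indicator_mul_le m _ w

end Linfty

open Linfty in
/- For `i ∈ L`, with `L` from Rosenthal's lemma, a functional norming the image of the `i`-th unit
vector sees little of the coordinates in `L \ {i}`. -/
theorem containsIsoCopyOfLinfty_of_le_norm_apply_indicator {ι X : Type*} [Infinite ι]
    [NormedAddCommGroup X] [NormedSpace ℝ X] (T : Linfty ι →L[ℝ] X) {ε : ℝ} (hε : 0 < ε)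
    (hT : ∀ i, ε ≤ ‖T (indicator {i})‖) : ContainsIsoCopyOfLinfty X := by
  choose f hf1 hf using fun i => exists_dual_vector'' ℝ (T (indicator {i}))
  have norm_comp_le i : ‖f i ∘L T‖ ≤ ‖T‖ :=
    ((f i).opNorm_comp_le T).trans (mul_le_of_le_one_left (norm_nonneg T) (hf1 i))
  obtain ⟨L, hL, hLε⟩ := exists_infinite_forall_sdiff_singleton_le
    (a := fun i => variation (f i ∘L T)) (fun i => variation_nonneg _)
    (fun i _ _ h => (variation_union _ h).ge)
    (fun i J => (variation_le_norm _ J).trans (norm_comp_le i)) (half_pos hε)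
  let e : ℕ ↪ ι := hL.natEmbedding.trans (Function.Embedding.subtype _)
  have heL n : e n ∈ L := (hL.natEmbedding L n).2
  have hsupp u : ∀ i ∉ L, extend e u i = 0 := fun i hi =>
    extend_apply_of_notMem_range e u fun ⟨n, hn⟩ => hi (hn ▸ heL n)
  refine ⟨T ∘L (extend e).toContinuousLinearMap, ε / 2, half_pos hε, fun u => ?_⟩
  set w := extend e u
  suffices ‖u‖ ≤ (‖T w‖ + ε / 2 * ‖u‖) / ε by
    rw [le_div_iff₀ hε] at this
    change ε / 2 * ‖u‖ ≤ ‖T w‖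
    linarith
  refine norm_le (by positivity) fun n => (le_div_iff₀ hε).2 ?_
  calc |u n| * ε ≤ |w (e n)| * |f (e n) (T (indicator {e n}))| := by
        rw [extend_apply, hf, RCLike.ofReal_real_eq_id, id, abs_norm]
        gcongr
        exact hT (e n)
    _ ≤ |f (e n) (T w)| + variation (f (e n) ∘L T) (L \ {e n}) * ‖w‖ :=
        abs_apply_mul_abs_le (f (e n) ∘L T) (hsupp u) (e n)
    _ ≤ ‖T w‖ + ε / 2 * ‖u‖ := by
        rw [LinearIsometry.norm_map]
        gcongr
        · exact ((f _).le_opNorm _).trans (mul_le_of_le_one_left (norm_nonneg _) (hf1 _))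
        · exact hLε _ (heL n)

/-! ### Nikodym's boundedness theorem and Seever's theorem -/

theorem disjoint_biUnion_biUnion {α ι : Type*} {F : ι → Set α}
    (hF : Pairwise (Function.onFun Disjoint F)) {S T : Set ι} (h : Disjoint S T) :
    Disjoint (⋃ i ∈ S, F i) (⋃ i ∈ T, F i) := by
  simp only [Set.disjoint_iUnion_left, Set.disjoint_iUnion_right]
  exact fun j hj i hi => hF (h.ne_of_mem hi hj)

theorem biUnion_Ici_subset_and_pairwise_disjoint {α : Type*} {E F : ℕ → Set α}
    (hFE : ∀ n, F n ⊆ E n) (hE : ∀ n, E (n + 1) = E n \ F n) :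
    (∀ n, ⋃ k ∈ Set.Ici n, F k ⊆ E n) ∧ Pairwise (Function.onFun Disjoint F) := by
  have hanti : Antitone E := antitone_nat_of_succ_le fun n => (hE n).trans_subset Set.sdiff_subset
  refine ⟨fun n => Set.iUnion₂_subset fun k hk => (hFE k).trans (hanti hk), ?_⟩
  refine (pairwise_disjoint_on F).2 fun k l hkl => ?_
  have hl : F l ⊆ E k \ F k := (hFE l).trans ((hanti hkl).trans (hE k).subset)
  exact Set.disjoint_sdiff_right.mono_right hl

namespace Linfty

variable {ι : Type*} {𝓕 : Set (Linfty ι →L[ℝ] ℝ)} {q : Set ι → ℝ} {E : Set ι}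

/-- The variations on `E` of the members of `𝓕` are unbounded: the sets kept by the gliding hump
argument. -/
def UnboundedVariationOn (𝓕 : Set (Linfty ι →L[ℝ] ℝ)) (E : Set ι) : Prop :=
  ∀ K : ℝ, ∃ m ∈ 𝓕, K < variation m E

theorem UnboundedVariationOn.or_sdiff (hE : UnboundedVariationOn 𝓕 E) {G : Set ι} (hG : G ⊆ E) :
    UnboundedVariationOn 𝓕 G ∨ UnboundedVariationOn 𝓕 (E \ G) := by
  by_contra! h
  simp only [UnboundedVariationOn] at h
  push Not at h
  obtain ⟨⟨K, hK⟩, K', hK'⟩ := h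
  obtain ⟨m, hm, hlt⟩ := hE (K + K')
  rw [← Set.union_sdiff_cancel hG, variation_union m Set.disjoint_sdiff_right] at hlt
  exact hlt.not_ge (add_le_add (hK m hm) (hK' m hm))

theorem exists_subset_variation_lt (m : Linfty ι →L[ℝ] ℝ) (hE : 0 < variation m E) :
    ∃ G ⊆ E, variation m E < 4 * |m (indicator G)| := by
  by_contra! h
  have := variation_le_of_forall_subset m (B := variation m E / 4)
    fun F hF => (le_div_iff₀' four_pos).2 (h F hF)
  linarith

theorem UnboundedVariationOn.exists_hump (hE : UnboundedVariationOn 𝓕 E) {C : ℝ}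
    (hC : ∀ m ∈ 𝓕, |m (indicator E)| ≤ C) (R : ℝ) :
    ∃ m ∈ 𝓕, ∃ F ⊆ E, UnboundedVariationOn 𝓕 (E \ F) ∧ R ≤ |m (indicator F)| ∧
      variation m E ≤ 8 * |m (indicator F)| := by
  obtain ⟨m, hm, hlarge⟩ := hE (8 * (|R| + |C|))
  obtain ⟨G, hGE, hG⟩ := exists_subset_variation_lt m (lt_of_le_of_lt (by positivity) hlarge)
  have hadd : m (indicator E) = m (indicator G) + m (indicator (E \ G)) := by
    rw [← map_add, ← indicator_union Set.disjoint_sdiff_right, Set.union_sdiff_cancel hGE]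
  have hG' : variation m E ≤ 8 * |m (indicator (E \ G))| := by
    have h := abs_sub (m (indicator E)) (m (indicator (E \ G)))
    rw [hadd, add_sub_cancel_right, ← hadd] at h
    linarith [hC m hm, le_abs_self C, abs_nonneg R]
  have hR := le_abs_self R
  have hvar : 0 ≤ variation m E ∧ 8 * R ≤ variation m E :=
    ⟨variation_nonneg m E, by linarith [abs_nonneg C]⟩
  rcases hE.or_sdiff hGE with hbad | hbad
  · refine ⟨m, hm, E \ G, Set.sdiff_subset, ?_, by linarith, hG'⟩
    rwa [Set.sdiff_sdiff_cancel_left hGE]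
  · exact ⟨m, hm, G, hGE, hbad, by linarith, by linarith⟩

theorem UnboundedVariationOn.exists_hump_seq (h𝓕 : UnboundedVariationOn 𝓕 E)
    (hq : ∀ m ∈ 𝓕, ∀ J, |m (indicator J)| ≤ q J) :
    ∃ (m : ℕ → Linfty ι →L[ℝ] ℝ) (F : ℕ → Set ι), (∀ n, m n ∈ 𝓕) ∧
      Pairwise (Function.onFun Disjoint F) ∧
      (∀ n, variation (m n) (⋃ k ∈ Set.Ici n, F k) ≤ 8 * |m n (indicator (F n))|) ∧
      ∀ n, 2 * (n + 1 + ∑ k ∈ Finset.range n, q (F k)) ≤ |m n (indicator (F n))| := by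
  -- A state is a set `E` of unbounded variation with the size `c` required of the next hump.
  let State := {s : Set ι × ℝ // UnboundedVariationOn 𝓕 s.1}
  choose m hm F hFE hF hlarge hvar using
    fun s : State => s.2.exists_hump (fun m hm => hq m hm _) s.1.2
  let next (s : State) : State := ⟨(s.1.1 \ F s, s.1.2 + 2 * (1 + q (F s))), hF s⟩
  let s (n : ℕ) : State := next^[n] ⟨(E, 2), h𝓕⟩
  have s_succ n : s (n + 1) = next (s n) := Function.iterate_succ_apply' _ _ _
  have size_eq n : (s n).1.2 = 2 * (n + 1 + ∑ k ∈ Finset.range n, q (F (s k))) := by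
    induction n with
    | zero => simp [s]
    | succ n ih =>
      rw [s_succ, Finset.sum_range_succ]
      simp only [next, ih]
      push_cast
      ring
  obtain ⟨hsub, hdisj⟩ := biUnion_Ici_subset_and_pairwise_disjoint (E := fun n => (s n).1.1)
    (fun n => hFE (s n)) fun n => by simp only [s_succ, next]
  exact ⟨fun n => m (s n), fun n => F (s n), fun n => hm _, hdisj,
    fun n => (variation_mono _ (hsub n)).trans (hvar _), fun n => (size_eq n).ge.trans (hlarge _)⟩

open Classical in
theorem indicator_biUnion_eq_head_add_tail_add {F : ℕ → Set ι}
    (hF : Pairwise (Function.onFun Disjoint F)) {L : Set ℕ} {n : ℕ} (hn : n ∈ L) :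
    indicator (⋃ k ∈ L, F k) = indicator (⋃ k ∈ {k ∈ Finset.range n | k ∈ L}, F k) +
      indicator (⋃ k ∈ (L \ {n}) ∩ Set.Ici n, F k) + indicator (F n) := by
  set head : Finset ℕ := {k ∈ Finset.range n | k ∈ L}
  set tail : Set ℕ := (L \ {n}) ∩ Set.Ici n
  have hL : L = (↑head ∪ tail) ∪ {n} := by
    ext k
    simp only [head, tail, Set.mem_union, Set.mem_inter_iff, Set.mem_sdiff, Set.mem_singleton_iff,
      Set.mem_Ici, Finset.mem_coe, Finset.mem_filter, Finset.mem_range]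
    grind
  have hhead_tail : Disjoint (↑head : Set ℕ) tail :=
    Set.disjoint_left.2 fun k hk hk' => hk'.2.not_gt (Finset.mem_range.1 (Finset.mem_filter.1 hk).1)
  have hn_notMem : Disjoint (↑head ∪ tail) {n} := by
    simp [head, tail]
  conv_lhs => rw [hL]
  rw [Set.biUnion_union, indicator_union (disjoint_biUnion_biUnion hF hn_notMem),
    Set.biUnion_union, indicator_union (disjoint_biUnion_biUnion hF hhead_tail),
    Set.biUnion_singleton]
  rfl

theorem half_abs_apply_indicator_le (m : Linfty ι →L[ℝ] ℝ) (hq : ∀ J, |m (indicator J)| ≤ q J)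
    {F : ℕ → Set ι} (hF : Pairwise (Function.onFun Disjoint F)) {L : Set ℕ} {n : ℕ} (hn : n ∈ L)
    (htail : variation m (⋃ k ∈ (L \ {n}) ∩ Set.Ici n, F k) ≤ |m (indicator (F n))| / 2) :
    |m (indicator (F n))| / 2 ≤ q (⋃ k ∈ L, F k) + ∑ k ∈ Finset.range n, q (F k) := by
  classical
  set head : Finset ℕ := {k ∈ Finset.range n | k ∈ L}
  have hhead : |m (indicator (⋃ k ∈ head, F k))| ≤ ∑ k ∈ Finset.range n, q (F k) :=
    calc |m (indicator (⋃ k ∈ head, F k))| ≤ ∑ k ∈ head, |m (indicator (F k))| := by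
          rw [indicator_biUnion hF, map_sum]
          exact Finset.abs_sum_le_sum_abs _ _
      _ ≤ ∑ k ∈ head, q (F k) := Finset.sum_le_sum fun k _ => hq (F k)
      _ ≤ ∑ k ∈ Finset.range n, q (F k) :=
          Finset.sum_le_sum_of_subset_of_nonneg (Finset.filter_subset _ _)
            fun k _ _ => (abs_nonneg _).trans (hq (F k))
  have hmU := hq (⋃ k ∈ L, F k)
  rw [indicator_biUnion_eq_head_add_tail_add hF hn, map_add, map_add] at hmU
  have hmtail := (abs_apply_indicator_le m _).trans htail
  have htri := abs_sub_abs_le_abs_add (m (indicator (F n))) (m (indicator (⋃ k ∈ head, F k)) +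
    m (indicator (⋃ k ∈ (L \ {n}) ∩ Set.Ici n, F k)))
  rw [add_comm (m (indicator (F n)))] at htri
  linarith [abs_add_le (m (indicator (⋃ k ∈ head, F k)))
    (m (indicator (⋃ k ∈ (L \ {n}) ∩ Set.Ici n, F k)))]

/- Nikodym's boundedness theorem. If it failed, the gliding hump would produce disjoint sets `F n`
and members `m n` of `𝓕` with `m n (F n)` large; Rosenthal's lemma thins them out to indices `n ∈ L`
for which `m n` is mostly carried by `F n` among the later sets, and then the values `m n (F n)`
force `𝓕` to be unbounded on `⋃ k ∈ L, F k`. -/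
theorem exists_forall_norm_le_of_forall_indicator
    (h : ∀ J : Set ι, ∃ C : ℝ, ∀ m ∈ 𝓕, |m (indicator J)| ≤ C) : ∃ K : ℝ, ∀ m ∈ 𝓕, ‖m‖ ≤ K := by
  choose q hq using h
  by_contra! hunb
  have h𝓕 : UnboundedVariationOn 𝓕 Set.univ := by simpa only [UnboundedVariationOn, variation_univ]
  obtain ⟨m, F, hm, hdisj, hvar, hlarge⟩ := h𝓕.exists_hump_seq fun m hm J => hq J m hm
  have hpos n : 0 < |m n (indicator (F n))| := by
    have hsum : 0 ≤ ∑ k ∈ Finset.range n, q (F k) :=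
      Finset.sum_nonneg fun k _ => (abs_nonneg _).trans (hq (F k) (m n) (hm n))
    linarith [hlarge n, n.cast_nonneg (α := ℝ)]
  obtain ⟨L, hLinf, hL⟩ := exists_infinite_forall_sdiff_singleton_le (δ := 1 / 2)
    (a := fun n J => variation (m n) (⋃ k ∈ J ∩ Set.Ici n, F k) / |m n (indicator (F n))|)
    (fun n J => div_nonneg (variation_nonneg _ _) (abs_nonneg _))
    (fun n J K hJK => by
      rw [← add_div, Set.union_inter_distrib_right, Set.biUnion_union, variation_union _
        (disjoint_biUnion_biUnion hdisj (hJK.mono Set.inter_subset_left Set.inter_subset_left))])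
    (fun n J => (div_le_iff₀ (hpos n)).2 <| (variation_mono _
      (Set.biUnion_subset_biUnion_left Set.inter_subset_right)).trans (hvar n)) (by norm_num)
  obtain ⟨N, hN⟩ := exists_nat_gt (q (⋃ k ∈ L, F k))
  obtain ⟨n, hnL, hn⟩ := hLinf.exists_gt N
  have htail := (div_le_iff₀ (hpos n)).1 (hL n hnL)
  have hhalf := half_abs_apply_indicator_le (m n) (fun J => hq J (m n) (hm n)) hdisj hnL
    (htail.trans_eq (by ring))
  have hNn : (N : ℝ) < n := Nat.cast_lt.2 hn
  linarith [hlarge n]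

end Linfty

/- Successive approximation, as in the proof of the open mapping theorem. -/
theorem surjective_of_forall_exists_norm_sub_le {E F : Type*} [NormedAddCommGroup E]
    [CompleteSpace E] [NormedAddCommGroup F] (f : E →+ F) (hf : Continuous f) {θ C : ℝ}
    (hθ0 : 0 ≤ θ) (hθ1 : θ < 1) (h : ∀ y, ∃ x, ‖y - f x‖ ≤ θ * ‖y‖ ∧ ‖x‖ ≤ C * ‖y‖) :
    Function.Surjective f := by
  choose r hrθ hrC using h
  intro y
  let w (n : ℕ) : F := (fun y => y - f (r y))^[n] y
  have w_succ n : w (n + 1) = w n - f (r (w n)) := Function.iterate_succ_apply' _ _ _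
  have norm_w_le n : ‖w n‖ ≤ θ ^ n * ‖y‖ := by
    induction n with
    | zero => simp [w]
    | succ n ih =>
      rw [w_succ, pow_succ', mul_assoc]
      exact (hrθ _).trans (mul_le_mul_of_nonneg_left ih hθ0)
  have hgeom : Summable fun n => θ ^ n * ‖y‖ := (summable_geometric_of_lt_one hθ0 hθ1).mul_right _
  have hw : Filter.Tendsto w Filter.atTop (nhds 0) :=
    squeeze_zero_norm norm_w_le hgeom.tendsto_atTop_zero
  have hsum : Summable fun n => r (w n) := by
    refine Summable.of_norm_bounded (hgeom.mul_left |C|) fun n => (hrC _).trans ?_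
    exact mul_le_mul (le_abs_self C) (norm_w_le n) (norm_nonneg _) (abs_nonneg C)
  have f_sum n : f (∑ k ∈ Finset.range n, r (w k)) = y - w n := by
    induction n with
    | zero => simp [w]
    | succ n ih => rw [Finset.sum_range_succ, map_add, ih, w_succ, sub_add]
  refine ⟨∑' n, r (w n), tendsto_nhds_unique
    ((hf.tendsto _).comp hsum.hasSum.tendsto_sum_nat) ?_⟩
  simpa [Function.comp_def, f_sum] using tendsto_const_nhds.sub hw

section DualBound

variable {E F : Type*} [NormedAddCommGroup E] [NormedSpace ℝ E] [NormedAddCommGroup F]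
  [NormedSpace ℝ F] {π : E →L[ℝ] F} {K : ℝ}

theorem mem_closure_image_closedBall_of_forall_norm_le
    (h : ∀ m : F →L[ℝ] ℝ, ‖m ∘L π‖ ≤ 1 → ‖m‖ ≤ K) {y : F} (hy : K * ‖y‖ ≤ 1) :
    y ∈ closure (π '' Metric.closedBall 0 1) := by
  by_contra hcl
  obtain ⟨m, t, hball, hmy⟩ := geometric_hahn_banach_closed_point
    ((convex_closedBall (0 : E) 1).linear_image π.toLinearMap).closure isClosed_closure hcl
  have hlt x (hx : ‖x‖ ≤ 1) : m (π x) < t := hball _ (subset_closure ⟨x, by simpa using hx, rfl⟩)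
  have ht : 0 < t := by simpa using hlt 0 (by simp)
  have hcomp : ‖(t⁻¹ • m) ∘L π‖ ≤ 1 := by
    refine ContinuousLinearMap.opNorm_le_of_unit_norm zero_le_one fun x hx => ?_
    have hneg := hlt (-x) (by rw [norm_neg, hx])
    rw [map_neg, map_neg, neg_lt] at hneg
    have habs : |m (π x)| ≤ t := abs_le.2 ⟨hneg.le, (hlt x hx.le).le⟩
    rw [ContinuousLinearMap.smul_comp, smul_apply, norm_smul, norm_inv, Real.norm_of_nonneg ht.le]
    exact (inv_mul_le_one₀ ht).2 habs
  have hle : (t⁻¹ • m) y ≤ 1 := calc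
    (t⁻¹ • m) y ≤ ‖t⁻¹ • m‖ * ‖y‖ := (le_abs_self _).trans ((t⁻¹ • m).le_opNorm y)
    _ ≤ K * ‖y‖ := mul_le_mul_of_nonneg_right (h _ hcomp) (norm_nonneg y)
    _ ≤ 1 := hy
  rw [smul_apply, smul_eq_mul, inv_mul_le_one₀ ht] at hle
  exact hmy.not_ge hle

theorem surjective_of_forall_norm_le [CompleteSpace E]
    (h : ∀ m : F →L[ℝ] ℝ, ‖m ∘L π‖ ≤ 1 → ‖m‖ ≤ K) : Function.Surjective π := by
  have hK : 0 ≤ K := by simpa using h 0 (by simp)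
  refine surjective_of_forall_exists_norm_sub_le (θ := 1 / 2) (C := K + 1)
    π.toLinearMap.toAddMonoidHom π.continuous (by norm_num) (by norm_num) fun y => ?_
  rcases eq_or_ne y 0 with rfl | hy
  · exact ⟨0, by simp⟩
  set s := (K + 1) * ‖y‖ with hs
  have : 0 < ‖y‖ := norm_pos_iff.2 hy
  have hs0 : 0 < s := by positivity
  have hmem : s⁻¹ • y ∈ closure (π '' Metric.closedBall 0 1) := by
    refine mem_closure_image_closedBall_of_forall_norm_le h ?_
    rw [norm_smul, norm_inv, Real.norm_of_nonneg hs0.le, mul_left_comm, inv_mul_le_one₀ hs0, hs]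
    gcongr
    linarith
  obtain ⟨_, ⟨x, hx, rfl⟩, hdist⟩ :=
    Metric.mem_closure_iff.1 hmem (1 / 2 * ‖y‖ / s) (by positivity)
  refine ⟨s • x, ?_, ?_⟩
  · have hscale : y - π (s • x) = s • (s⁻¹ • y - π x) := by
      rw [smul_sub, smul_inv_smul₀ hs0.ne', map_smul]
    change ‖y - π (s • x)‖ ≤ _
    rw [hscale, norm_smul, Real.norm_of_nonneg hs0.le, ← le_div_iff₀' hs0, ← dist_eq_norm]
    exact hdist.le
  · rw [norm_smul, Real.norm_of_nonneg hs0.le]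
    exact mul_le_of_le_one_right hs0.le (by simpa using hx)

end DualBound

namespace Linfty

variable {ι : Type*}

/- Seever's theorem: by Nikodym, the functionals whose pullbacks along `π` are bounded by `1` are
uniformly bounded. -/
theorem surjective_of_indicator_mem_range {E : Type*} [NormedAddCommGroup E] [NormedSpace ℝ E]
    [CompleteSpace E] (π : E →L[ℝ] Linfty ι) (h : ∀ J, indicator J ∈ Set.range π) :
    Function.Surjective π := by
  obtain ⟨K, hK⟩ := exists_forall_norm_le_of_forall_indicator (𝓕 := {m | ‖m ∘L π‖ ≤ 1})
    fun J => by
      obtain ⟨x, hx⟩ := h J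
      refine ⟨‖x‖, fun m hm => hx ▸ ?_⟩
      exact ((m ∘L π).le_opNorm x).trans (mul_le_of_le_one_left (norm_nonneg x) hm)
  exact surjective_of_forall_norm_le hK

end Linfty

/-! ### Series whose subseries all converge weakly -/

namespace Linfty

variable {ι X α : Type*} [NormedAddCommGroup X] [NormedSpace ℝ X] [CompleteSpace X]

/- The graph of the wanted operator is closed, and its projection to `ℓ∞(ι)` is injective, as `k`
separates points, and onto by Seever's theorem. -/
theorem exists_forall_apply_eq_of_forall_indicator {k : α → X →L[ℝ] ℝ}
    (hk : ∀ x, (∀ a, k a x = 0) → x = 0) (l : α → Linfty ι →L[ℝ] ℝ)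
    (h : ∀ J, ∃ z, ∀ a, k a z = l a (indicator J)) :
    ∃ T : Linfty ι →L[ℝ] X, ∀ u a, k a (T u) = l a u := by
  let fst := ContinuousLinearMap.fst ℝ (Linfty ι) X
  let snd := ContinuousLinearMap.snd ℝ (Linfty ι) X
  let G : Submodule ℝ (Linfty ι × X) := ⨅ a, (k a ∘L snd - l a ∘L fst).ker
  have mem_G p : p ∈ G ↔ ∀ a, k a p.2 = l a p.1 := by
    simp only [G, Submodule.mem_iInf, LinearMap.mem_ker]
    exact forall_congr' fun a => sub_eq_zero
  have isClosed_G : IsClosed (G : Set (Linfty ι × X)) := by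
    simp only [G, Submodule.coe_iInf]
    exact isClosed_iInter fun a => ContinuousLinearMap.isClosed_ker _
  have : CompleteSpace G := isClosed_G.completeSpace_coe
  let π : G →L[ℝ] Linfty ι := fst ∘L G.subtypeL
  have hπ_inj : Function.Injective π := by
    refine (injective_iff_map_eq_zero π).2 fun p (hp : p.1.1 = 0) => ?_
    refine Subtype.ext (Prod.ext hp (hk _ fun a => ?_))
    rw [(mem_G p).1 p.2 a, hp, map_zero]
  have hπ_surj : Function.Surjective π := surjective_of_indicator_mem_range π fun J =>
    let ⟨z, hz⟩ := h J
    ⟨⟨(indicator J, z), (mem_G _).2 hz⟩, rfl⟩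
  let e := ContinuousLinearEquiv.ofBijective π (LinearMap.ker_eq_bot.2 hπ_inj)
    (LinearMap.range_eq_top.2 hπ_surj)
  refine ⟨snd ∘L G.subtypeL ∘L (e.symm : Linfty ι →L[ℝ] G), fun u a => ?_⟩
  exact ((mem_G _).1 (e.symm u).2 a).trans (congrArg (l a) (e.apply_symm_apply u))

end Linfty

theorem Linfty.exists_forall_hasSum_apply_indicator {ι : Type*} {a : ι → ℝ} (ha : Summable a) :
    ∃ l : Linfty ι →L[ℝ] ℝ, ∀ J : Set ι, HasSum (fun i : J => a i) (l (indicator J)) := by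
  let a' : lp (fun _ : ι => ℝ) 1 := ⟨a, memℓp_gen (by simpa using ha.abs)⟩
  let l : Linfty ι →L[ℝ] ℝ :=
    lp.dualPairing 1 ⊤ (fun _ => ContinuousLinearMap.mul ℝ ℝ) (K := 1) (fun _ => by simp) a'
  refine ⟨l, fun J => ?_⟩
  have hl : l (indicator J) = ∑' i : J, a i := by
    rw [tsum_subtype]
    refine tsum_congr fun i => ?_
    change a i * indicator J i = J.indicator a i
    by_cases hi : i ∈ J <;> simp [indicator_apply, hi]
  exact hl ▸ (ha.subtype J).hasSum

theorem exists_seq_disjoint_le_norm_sum_of_not_summable {ι X : Type*}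
    [NormedAddCommGroup X] [CompleteSpace X] {x : ι → X} (hx : ¬ Summable x) :
    ∃ ε > 0, ∃ t : ℕ → Finset ι, (Pairwise fun k l => Disjoint (t k) (t l)) ∧
      ∀ k, ε ≤ ‖∑ i ∈ t k, x i‖ := by
  classical
  rw [summable_iff_vanishing_norm] at hx
  push Not at hx
  obtain ⟨ε, hε, hx⟩ := hx
  obtain ⟨t, ht_norm, ht_disj⟩ := exists_seq_of_forall_finset_exists'
    (fun t : Finset ι => ε ≤ ‖∑ i ∈ t, x i‖) Disjoint fun S _ => by
      obtain ⟨t, ht_disj, ht_norm⟩ := hx (S.sup id)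
      exact ⟨t, ht_norm, fun s hs => (ht_disj.mono_right (Finset.le_sup (f := id) hs)).symm⟩
  exact ⟨ε, hε, t, ht_disj, ht_norm⟩

section SigmaSum

variable {ι X : Type*} [NormedAddCommGroup X] [NormedSpace ℝ X] {Y : Set (X →L[ℝ] ℝ)} {x : ι → X}

/-- The family `x` is (unconditionally) summable with sum `z` for the topology `σ(X, Y)`. -/
def HasSigmaSum (Y : Set (X →L[ℝ] ℝ)) (x : ι → X) (z : X) : Prop :=
  ∀ f ∈ Y, HasSum (fun i => f (x i)) (f z)

theorem eq_of_forall_mem_apply_eq (hY : ∀ x : X, (∀ f ∈ Y, f x = 0) → x = 0) {x y : X}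
    (h : ∀ f ∈ Y, f x = f y) : x = y :=
  sub_eq_zero.1 (hY _ fun f hf => by rw [map_sub, h f hf, sub_self])

theorem HasSigmaSum.eq_of_hasSum (hY : ∀ x : X, (∀ f ∈ Y, f x = 0) → x = 0) {z s : X}
    (hz : HasSigmaSum Y x z) (hs : HasSum x s) : z = s :=
  eq_of_forall_mem_apply_eq hY fun f hf => (hz f hf).unique (hs.mapL f)

theorem HasSigmaSum.sum_blocks {t : ℕ → Finset ι}
    (ht : Pairwise fun k l => Disjoint (t k) (t l)) {J : Set ℕ} {z : X}
    (h : HasSigmaSum Y (fun i : ⋃ k : J, (t k : Set ι) => x i) z) :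
    HasSigmaSum Y (fun k : J => ∑ i ∈ t k, x i) z := by
  intro f hf
  have hdisj : Pairwise fun k l : J => Disjoint (t k : Set ι) (t l : Set ι) := fun k l hkl =>
    Finset.disjoint_coe.2 (ht (Subtype.coe_ne_coe.2 hkl))
  have hsigma := (Set.unionEqSigmaOfDisjoint hdisj).symm.hasSum_iff.2 (h f hf)
  convert hsigma.sigma fun k => hasSum_fintype _ with k
  rw [map_sum, ← Finset.sum_coe_sort]
  rfl

theorem exists_forall_apply_indicator_singleton_eq [CompleteSpace X]
    (hY : ∀ x : X, (∀ f ∈ Y, f x = 0) → x = 0)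
    (h : ∀ J : Set ι, ∃ z, HasSigmaSum Y (fun i : J => x i) z) :
    ∃ T : Linfty ι →L[ℝ] X, ∀ i, T (Linfty.indicator {i}) = x i := by
  have hsummable (f : Y) : Summable fun i => (f : X →L[ℝ] ℝ) (x i) := by
    obtain ⟨z, hz⟩ := h Set.univ
    exact (Equiv.Set.univ ι).summable_iff.1 (hz f f.2).summable
  choose l hl using fun f : Y => Linfty.exists_forall_hasSum_apply_indicator (hsummable f)
  obtain ⟨T, hT⟩ := Linfty.exists_forall_apply_eq_of_forall_indicator
    (k := fun f : Y => (f : X →L[ℝ] ℝ)) (fun x hx => hY x fun f hf => hx ⟨f, hf⟩) l fun J =>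
      let ⟨z, hz⟩ := h J
      ⟨z, fun f => (hz f f.2).unique (hl f J)⟩
  refine ⟨T, fun i => eq_of_forall_mem_apply_eq hY fun f hf => ?_⟩
  exact (hT _ ⟨f, hf⟩).trans ((hl ⟨f, hf⟩ {i}).unique (hasSum_unique _))

/- The Diestel–Faires theorem: the blocks of a divergent series would be the images of the unit
vectors under an operator on `ℓ∞`, which then fixes a copy of `ℓ∞` by Rosenthal's theorem. -/
theorem summable_of_forall_exists_hasSigmaSum [CompleteSpace X] (hX : ¬ ContainsIsoCopyOfLinfty X)
    (hY : ∀ x : X, (∀ f ∈ Y, f x = 0) → x = 0)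
    (h : ∀ J : Set ι, ∃ z, HasSigmaSum Y (fun i : J => x i) z) : Summable x := by
  by_contra hx
  obtain ⟨ε, hε, t, ht_disj, ht_norm⟩ := exists_seq_disjoint_le_norm_sum_of_not_summable hx
  obtain ⟨T, hT⟩ := exists_forall_apply_indicator_singleton_eq (x := fun k => ∑ i ∈ t k, x i) hY
    fun J => (h _).imp fun z hz => hz.sum_blocks ht_disj
  exact hX (containsIsoCopyOfLinfty_of_le_norm_apply_indicator T hε fun k => hT k ▸ ht_norm k)

end SigmaSum

/-! ### Support functions and sums of selections -/

section SelectionSums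

variable {ι : Type*}

/-- The sum of the family of sets `K i` in a topological vector space: the set of all sums of
selections, extending `seriesSumSet` beyond sequences of subsets of a normed space. -/
def selectionSums {E : Type*} [AddCommMonoid E] [TopologicalSpace E] (K : ι → Set E) : Set E :=
  {s | ∃ x : ι → E, (∀ i, x i ∈ K i) ∧ HasSum x s}

theorem convex_selectionSums {E : Type*} [AddCommGroup E] [Module ℝ E] [TopologicalSpace E]
    [ContinuousAdd E] [ContinuousConstSMul ℝ E] {K : ι → Set E} (hK : ∀ i, Convex ℝ (K i)) :
    Convex ℝ (selectionSums K) := by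
  rintro s ⟨x, hx, hxs⟩ t ⟨y, hy, hyt⟩ a b ha hb hab
  exact ⟨fun i => a • x i + b • y i, fun i => hK i (hx i) (hy i) ha hb hab,
    (hxs.const_smul a).add (hyt.const_smul b)⟩

theorem isCompact_selectionSums_pi {α : Type*} {K : ι → Set (α → ℝ)} (hK : ∀ i, IsCompact (K i))
    {b : α → ι → ℝ} (hb : ∀ a, Summable (b a)) (hKb : ∀ i, ∀ p ∈ K i, ∀ a, |p a| ≤ b a i) :
    IsCompact (selectionSums K) := by
  have h_eq : selectionSums K = (fun (q : ι → α → ℝ) a => ∑' i, q i a) '' Set.univ.pi K := by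
    ext p
    constructor
    · rintro ⟨q, hq, hqp⟩
      exact ⟨q, fun i _ => hq i, funext fun a => (Pi.hasSum.1 hqp a).tsum_eq⟩
    · rintro ⟨q, hq, rfl⟩
      refine ⟨q, fun i => hq i trivial, Pi.hasSum.2 fun a => ?_⟩
      exact (Summable.of_norm_bounded (hb a) fun i => hKb i _ (hq i trivial) a).hasSum
  rw [h_eq]
  refine (isCompact_univ_pi hK).image_of_continuousOn (continuousOn_pi.2 fun a => ?_)
  exact continuousOn_tsum (fun i => by fun_prop) (hb a) fun i q hq => hKb i _ (hq i trivial) a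

theorem subset_of_forall_exists_le {E : Type*} [AddCommGroup E] [Module ℝ E] [TopologicalSpace E]
    [IsTopologicalAddGroup E] [ContinuousSMul ℝ E] [LocallyConvexSpace ℝ E] {s t : Set E}
    (ht : Convex ℝ t) (ht_closed : IsClosed t)
    (h : ∀ φ : E →L[ℝ] ℝ, ∀ p ∈ s, ∃ q ∈ t, φ p ≤ φ q) : s ⊆ t := fun p hp =>
  iInter_halfSpaces_eq ht ht_closed ▸ Set.mem_iInter.2 fun φ => h φ p hp

end SelectionSums

section Support

variable {X : Type*} [NormedAddCommGroup X] [NormedSpace ℝ X]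

section Compact

variable {Y : Set (X →L[ℝ] ℝ)} {C : Set X} {f : X →L[ℝ] ℝ}

theorem continuous_sigmaTop (hf : f ∈ Y) : @Continuous X ℝ (sigmaTop Y) _ f :=
  @Continuous.comp X (Y → ℝ) ℝ (sigmaTop Y) _ _ _ (fun p => p ⟨f, hf⟩) (continuous_apply _)
    continuous_induced_dom

theorem isCompact_image_of_sigmaTop (hC : @IsCompact X (sigmaTop Y) C) (hf : f ∈ Y) :
    IsCompact (f '' C) :=
  @IsCompact.image X ℝ (sigmaTop Y) _ C f hC (continuous_sigmaTop hf)

theorem le_supportFn (hC : @IsCompact X (sigmaTop Y) C) (hf : f ∈ Y) {x : X} (hx : x ∈ C) :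
    f x ≤ supportFn f C :=
  le_csSup (isCompact_image_of_sigmaTop hC hf).bddAbove ⟨x, hx, rfl⟩

theorem exists_mem_apply_eq_supportFn (hC : @IsCompact X (sigmaTop Y) C) (hf : f ∈ Y)
    (hne : C.Nonempty) : ∃ x ∈ C, f x = supportFn f C :=
  (isCompact_image_of_sigmaTop hC hf).sSup_mem (hne.image f)

theorem abs_apply_le_abs_supportFn_add (hC : @IsCompact X (sigmaTop Y) C) (hf : f ∈ Y)
    (hf_neg : -f ∈ Y) {x : X} (hx : x ∈ C) :
    |f x| ≤ |supportFn f C| + |supportFn (-f) C| := by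
  have hle := (le_supportFn hC hf hx).trans (le_abs_self _)
  have hle_neg := (le_supportFn hC hf_neg hx).trans (le_abs_self _)
  rw [neg_apply] at hle_neg
  exact abs_le'.2 ⟨by linarith [abs_nonneg (supportFn (-f) C)],
    by linarith [abs_nonneg (supportFn f C)]⟩

end Compact

/-- The evaluation map `X → ℝ^Y`, which induces the topology `σ(X, Y)`. -/
def evalMap (Y : Submodule ℝ (X →L[ℝ] ℝ)) : X →ₗ[ℝ] Y → ℝ :=
  LinearMap.pi fun f => (f : X →L[ℝ] ℝ)

variable {Y : Submodule ℝ (X →L[ℝ] ℝ)}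

theorem continuous_evalMap :
    @Continuous X (Y → ℝ) (sigmaTop (Y : Set (X →L[ℝ] ℝ))) _ (evalMap Y) :=
  continuous_induced_dom

theorem isCompact_evalMap_image {C : Set X}
    (hC : @IsCompact X (sigmaTop (Y : Set (X →L[ℝ] ℝ))) C) : IsCompact (evalMap Y '' C) :=
  @IsCompact.image X (Y → ℝ) (sigmaTop (Y : Set (X →L[ℝ] ℝ))) _ C _ hC continuous_evalMap

theorem exists_mem_forall_apply_evalMap_eq (φ : (Y → ℝ) →L[ℝ] ℝ) :
    ∃ g ∈ Y, ∀ x, φ (evalMap Y x) = g x := by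
  let F : Y →ₗ[ℝ] X →ₗ[ℝ] ℝ := ContinuousLinearMap.coeLM ℝ ∘ₗ Y.subtype
  have hspan : φ.toLinearMap ∘ₗ evalMap Y ∈ Submodule.span ℝ (Set.range F) := by
    rw [LinearMap.mem_span_iff_continuous, ← induced_to_pi]
    exact @Continuous.comp X (Y → ℝ) ℝ (sigmaTop (Y : Set (X →L[ℝ] ℝ))) _ _ _ φ φ.continuous
      continuous_evalMap
  rw [← LinearMap.coe_range, Submodule.span_eq] at hspan
  obtain ⟨g, hg⟩ := hspan
  exact ⟨g, g.2, fun x => (LinearMap.congr_fun hg x).symm⟩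

theorem hasSum_evalMap_iff {ι : Type*} {x : ι → X} {z : X} :
    HasSum (fun i => evalMap Y (x i)) (evalMap Y z) ↔
      HasSigmaSum (Y : Set (X →L[ℝ] ℝ)) x z :=
  Pi.hasSum.trans Subtype.forall

section Selections

variable {ι : Type*} {C : ι → Set X} {D : Set X} {x : ι → X}

theorem summable_abs_supportFn_add
    (hs : ∀ f ∈ Y, Summable fun i => supportFn f (C i)) (f : Y) :
    Summable fun i => |supportFn (f : X →L[ℝ] ℝ) (C i)| + |supportFn (-f : X →L[ℝ] ℝ) (C i)| :=
  (hs f f.2).abs.add (hs _ (Y.neg_mem f.2)).abs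

theorem summable_evalMap (hC : ∀ i, @IsCompact X (sigmaTop (Y : Set (X →L[ℝ] ℝ))) (C i))
    (hs : ∀ f ∈ Y, Summable fun i => supportFn f (C i)) (hx : ∀ i, x i ∈ C i) :
    Summable fun i => evalMap Y (x i) :=
  Pi.summable.2 fun f => Summable.of_norm_bounded (summable_abs_supportFn_add hs f) fun i =>
    abs_apply_le_abs_supportFn_add (hC i) f.2 (Y.neg_mem f.2) (hx i)

theorem isCompact_selectionSums_evalMap
    (hC : ∀ i, @IsCompact X (sigmaTop (Y : Set (X →L[ℝ] ℝ))) (C i))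
    (hs : ∀ f ∈ Y, Summable fun i => supportFn f (C i)) :
    IsCompact (selectionSums fun i => evalMap Y '' C i) := by
  refine isCompact_selectionSums_pi (fun i => isCompact_evalMap_image (hC i))
    (summable_abs_supportFn_add hs) ?_
  rintro i _ ⟨x, hx, rfl⟩ f
  exact abs_apply_le_abs_supportFn_add (hC i) f.2 (Y.neg_mem f.2) hx

theorem exists_mem_hasSigmaSum_of_selection
    (hC : ∀ i, @IsCompact X (sigmaTop (Y : Set (X →L[ℝ] ℝ))) (C i))
    (hs : ∀ f ∈ Y, HasSum (fun i => supportFn f (C i)) (supportFn f D))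
    (hD : @IsCompact X (sigmaTop (Y : Set (X →L[ℝ] ℝ))) D) (hD_ne : D.Nonempty)
    (hD_conv : Convex ℝ D) (hx : ∀ i, x i ∈ C i) :
    ∃ z ∈ D, HasSigmaSum (Y : Set (X →L[ℝ] ℝ)) x z := by
  obtain ⟨p, hp⟩ := summable_evalMap hC (fun f hf => (hs f hf).summable) hx
  have h_le (φ : (Y → ℝ) →L[ℝ] ℝ) : ∃ q ∈ evalMap Y '' D, φ p ≤ φ q := by
    obtain ⟨g, hg, hφg⟩ := exists_mem_forall_apply_evalMap_eq φ
    obtain ⟨d, hd, hgd⟩ := exists_mem_apply_eq_supportFn hD hg hD_ne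
    refine ⟨_, ⟨d, hd, rfl⟩, ?_⟩
    rw [hφg, hgd]
    refine hasSum_le (fun i => ?_) (hp.mapL φ) (hs g hg)
    exact (hφg (x i)).trans_le (le_supportFn (hC i) hg (hx i))
  obtain ⟨z, hz, rfl⟩ := subset_of_forall_exists_le (s := {p}) (hD_conv.linear_image (evalMap Y))
    (isCompact_evalMap_image hD).isClosed (by simpa using h_le) rfl
  exact ⟨z, hz, hasSum_evalMap_iff.1 hp⟩

theorem exists_selection_hasSigmaSum_of_mem
    (hC : ∀ i, @IsCompact X (sigmaTop (Y : Set (X →L[ℝ] ℝ))) (C i))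
    (hs : ∀ f ∈ Y, HasSum (fun i => supportFn f (C i)) (supportFn f D))
    (hD : @IsCompact X (sigmaTop (Y : Set (X →L[ℝ] ℝ))) D)
    (hC_ne : ∀ i, (C i).Nonempty) (hC_conv : ∀ i, Convex ℝ (C i)) {z : X} (hz : z ∈ D) :
    ∃ x : ι → X, (∀ i, x i ∈ C i) ∧ HasSigmaSum (Y : Set (X →L[ℝ] ℝ)) x z := by
  have hs' : ∀ f ∈ Y, Summable fun i => supportFn f (C i) := fun f hf => (hs f hf).summable
  have h_le (φ : (Y → ℝ) →L[ℝ] ℝ) :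
      ∃ q ∈ selectionSums fun i => evalMap Y '' C i, φ (evalMap Y z) ≤ φ q := by
    obtain ⟨g, hg, hφg⟩ := exists_mem_forall_apply_evalMap_eq φ
    choose y hy hgy using fun i => exists_mem_apply_eq_supportFn (hC i) hg (hC_ne i)
    obtain ⟨q, hq⟩ := summable_evalMap hC hs' hy
    have hφq : φ q = supportFn g D :=
      (hq.mapL φ).unique (by simpa only [hφg, hgy] using hs g hg)
    exact ⟨q, ⟨_, fun i => ⟨y i, hy i, rfl⟩, hq⟩, by rw [hφg, hφq]; exact le_supportFn hD hg hz⟩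
  obtain ⟨q, hq, hqz⟩ := subset_of_forall_exists_le (s := {evalMap Y z})
    (convex_selectionSums fun i => (hC_conv i).linear_image (evalMap Y))
    (isCompact_selectionSums_evalMap hC hs').isClosed (by simpa using h_le) rfl
  choose x hx hxq using hq
  obtain rfl : (fun i => evalMap Y (x i)) = q := funext hxq
  exact ⟨x, hx, hasSum_evalMap_iff.1 hqz⟩

end Selections

end Support

namespace CountablyAdditive

variable {Ω E : Type*} [MeasurableSpace Ω] [AddCommGroup E] [TopologicalSpace E]
  [IsTopologicalAddGroup E] [T2Space E] {ν : Set Ω → E}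

theorem apply_empty (hν : CountablyAdditive ν) : ν ∅ = 0 :=
  (summable_const_iff _).1
    (hν (fun _ => ∅) (fun _ => .empty) fun _ _ _ => Set.disjoint_empty _).summable

theorem hasSum_subtype (hν : CountablyAdditive ν) {A : ℕ → Set Ω} (hA : ∀ n, MeasurableSet (A n))
    (hdisj : Pairwise (Function.onFun Disjoint A)) (J : Set ℕ) :
    HasSum (fun n : J => ν (A n)) (ν (⋃ n ∈ J, A n)) := by
  refine hasSum_subtype_iff_indicator (f := fun n => ν (A n)).2 ?_
  have h_indicator n : J.indicator (fun n => ν (A n)) n = ν (⋃ _ : n ∈ J, A n) := by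
    by_cases hn : n ∈ J <;> simp [hn, hν.apply_empty]
  rw [funext h_indicator]
  exact hν _ (fun n => .iUnion fun _ => hA n) fun i j hij =>
    (hdisj hij).mono (Set.iUnion_subset fun _ => subset_rfl) (Set.iUnion_subset fun _ => subset_rfl)

end CountablyAdditive

/-- Let `X` be a Banach space containing no subspace isomorphic to
`ℓ∞` and `M : Σ → b(X)` a set-valued map. If there is a total linear subspace `Y ⊆ X*`
such that every `M(A)` is convex and `σ(X,Y)`-compact and `s(x*, M)` is countably
additive for every `x* ∈ Y`, then `M` is a strong multimeasure. -/
theorem statement6 {Ω X : Type*} [MeasurableSpace Ω]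
    [NormedAddCommGroup X] [NormedSpace ℝ X] [CompleteSpace X]
    (hX : ¬ ContainsIsoCopyOfLinfty X)
    (M : Set Ω → Set X)
    (hne : ∀ A : Set Ω, MeasurableSet A → (M A).Nonempty)
    (hbd : ∀ A : Set Ω, MeasurableSet A → Bornology.IsBounded (M A))
    (Y : Submodule ℝ (X →L[ℝ] ℝ))
    (hYtotal : ∀ x : X, (∀ f ∈ Y, f x = 0) → x = 0)
    (hconv : ∀ A : Set Ω, MeasurableSet A → Convex ℝ (M A))
    (hcpt : ∀ A : Set Ω, MeasurableSet A → @IsCompact X (sigmaTop (Y : Set (X →L[ℝ] ℝ))) (M A))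
    (hca : ∀ f ∈ Y, CountablyAdditive (fun A => supportFn f (M A))) :
    IsStrongMultimeasure M := by
  intro A hA hdisj
  have hcptA (n : ℕ) := hcpt _ (hA n)
  have hAU : MeasurableSet (⋃ n, A n) := .iUnion hA
  have hs := fun f hf => hca f hf A hA hdisj
  have hsummable : UncondConvSeriesOfSets fun n => M (A n) := by
    refine fun x hx => summable_of_forall_exists_hasSigmaSum hX hYtotal fun J => ?_
    have hAJ : MeasurableSet (⋃ n ∈ J, A n) := .biUnion J.to_countable fun n _ => hA n
    have hsJ := fun f hf => (hca f hf).hasSum_subtype hA hdisj J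
    obtain ⟨z, -, hz⟩ := exists_mem_hasSigmaSum_of_selection (fun n : J => hcptA n) hsJ
      (hcpt _ hAJ) (hne _ hAJ) (hconv _ hAJ) (fun n => hx n)
    exact ⟨z, hz⟩
  refine ⟨hsummable, congrArg closure (Set.Subset.antisymm ?_ ?_)⟩
  · intro z hz
    obtain ⟨x, hx, hxz⟩ := exists_selection_hasSigmaSum_of_mem hcptA hs (hcpt _ hAU)
      (fun n => hne _ (hA n)) (fun n => hconv _ (hA n)) hz
    obtain ⟨s, hxs⟩ := hsummable x hx
    exact ⟨x, hx, hxz.eq_of_hasSum hYtotal hxs ▸ hxs⟩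
  · rintro s ⟨x, hx, hxs⟩
    obtain ⟨z, hz, hxz⟩ := exists_mem_hasSigmaSum_of_selection hcptA hs (hcpt _ hAU) (hne _ hAU)
      (hconv _ hAU) hx
    exact hxz.eq_of_hasSum hYtotal hxs ▸ hz
end
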